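/- arXiv:math/0611310 — 2 statements merged into one kernel-verified Lean document; each statement's English description precedes it below -/
import Mathlib

section
/- (uniform two-parameter van der Corput lemma) Let G be a countable second countable topological group whose counting measure μ on the Borel σ-algebra Σ is right and left invariant, let K ⊆ G be a Borel measurable abelian subsemigroup with uniform Følner sequences (Λ_{1,n}) and (Λ_{2,n}), let H be a Hilbert space, and let f : G² → H be a bounded function such that ⟨f(·), x⟩ is Borel measurable for all x ∈ H and ⟨f(·), f(·)⟩ : G² × G² → ℂ is Borel measurable. Assume γ_{(g',h')} := lim_{n→∞} (1/(μ(Λ_{1,n})μ(Λ_{2,n}))) Σ_{h ∈ Λ_{1,n}} Σ_{g ∈ Λ_{2,n}} ⟨f(g,h), f(gg', hh')⟩ exists for all g', h' ∈ G, that lim_{m→∞} (1/(μ(Λ_{1,m})μ(Λ_{2,m}))) Σ_{h ∈ Λ_{1,m}⁻¹Λ_{1,m}} Σ_{g ∈ Λ_{2,m}⁻¹Λ_{2,m}} |γ_{(g,h)}| = 0, and that lim_{n→∞} sup_{g₁,g₂ ∈ K} | (1/(μ(Λ_{1,n})μ(Λ_{2,n}))) Σ_{h ∈ Λ_{1,n}g₁}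 Σ_{g ∈ Λ_{2,n}g₂} ⟨f(g,h), f(gg', hh')⟩ − γ_{(g',h')} | = 0 for all g', h' ∈ G. Then lim_{n→∞} sup_{g₁,g₂ ∈ K} ‖ (1/(μ(Λ_{1,n})μ(Λ_{2,n}))) Σ_{h ∈ Λ_{1,n}g₁} Σ_{g ∈ Λ_{2,n}g₂} f(g,h) ‖ = 0. -/
open MeasureTheory Filter Topology
open scoped Pointwise

/-!
Replacing `f` by its average over the right translates by a finite set `Q ⊆ K` changes the sum of
`f` over a Følner set `F` negligibly. By Cauchy–Schwarz, the square of the averaged sum is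
controlled by the correlations `∑ p ∈ F * {q}, ⟪f p, f (p * (q⁻¹ * q'))⟫` with `q, q' ∈ Q`, which
are close to `#F * γ (q⁻¹ * q')`. Each element of `Q⁻¹ * Q` is of the form `q⁻¹ * q'` for at most
`#Q` pairs, so the total correlation is at most `#F * #Q * ∑ k ∈ Q⁻¹ * Q, ‖γ k‖`, and this is
small compared to `#F * #Q ^ 2` when `Q` is a Følner set far out in the sequence. Commutativity of
`K` makes all estimates uniform over the translates `F * {c}`, `c ∈ K`.

Singletons need not be measurable, so an integral with respect to the counting measure over a
finite measurable set is a sum only for functions that are strongly measurable on that set; weak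
measurability suffices because a function of countable range is strongly measurable as soon as it
is weakly measurable.
-/

open Asymptotics
open scoped Finset InnerProductSpace

section FiniteSums

variable {α β Γ E H 𝕜 : Type*} [SeminormedAddCommGroup E] [RCLike 𝕜] [SeminormedAddCommGroup H]
  [InnerProductSpace 𝕜 H]

lemma norm_sum_sub_sum_le_of_card_eq [DecidableEq α] {s t : Finset α} (hst : #s = #t) {φ : α → E}
    {C : ℝ} (hC : ∀ a, ‖φ a‖ ≤ C) :
    ‖∑ a ∈ s, φ a - ∑ a ∈ t, φ a‖ ≤ 2 * C * #(s \ t) := by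
  have hs : ‖∑ a ∈ s \ t, φ a‖ ≤ #(s \ t) * C := by
    simpa using norm_sum_le_of_le (s \ t) fun a _ => hC a
  have ht : ‖∑ a ∈ t \ s, φ a‖ ≤ #(s \ t) * C := by
    simpa [Finset.card_sdiff_comm hst] using norm_sum_le_of_le (t \ s) fun a _ => hC a
  rw [← Finset.sum_sdiff_sub_sum_sdiff]
  linarith [norm_sub_le (∑ a ∈ s \ t, φ a) (∑ a ∈ t \ s, φ a)]

lemma sum_norm_sum_sq_le_sum_sum_norm_sum_inner (s : Finset α) (t : Finset β) (v : α → β → H) :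
    ∑ a ∈ s, ‖∑ b ∈ t, v a b‖ ^ 2 ≤
      ∑ b ∈ t, ∑ b' ∈ t, ‖∑ a ∈ s, ⟪v a b, v a b'⟫_𝕜‖ := by
  have expand : ∑ a ∈ s, ‖∑ b ∈ t, v a b‖ ^ 2 =
      RCLike.re (∑ b ∈ t, ∑ b' ∈ t, ∑ a ∈ s, ⟪v a b, v a b'⟫_𝕜) := by
    simp_rw [norm_sq_eq_re_inner (𝕜 := 𝕜), sum_inner, inner_sum, ← map_sum]
    rw [Finset.sum_comm]
    simp_rw [Finset.sum_comm (s := s)]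
  rw [expand]
  refine (RCLike.re_le_norm _).trans ((norm_sum_le _ _).trans ?_)
  exact Finset.sum_le_sum fun b _ => norm_sum_le _ _

lemma norm_sum_sum_sq_le_card_mul (s : Finset α) (t : Finset β) (v : α → β → H) :
    ‖∑ a ∈ s, ∑ b ∈ t, v a b‖ ^ 2 ≤
      #s * ∑ b ∈ t, ∑ b' ∈ t, ‖∑ a ∈ s, ⟪v a b, v a b'⟫_𝕜‖ :=
  calc ‖∑ a ∈ s, ∑ b ∈ t, v a b‖ ^ 2
    _ ≤ (∑ a ∈ s, ‖∑ b ∈ t, v a b‖) ^ 2 := by gcongr; exact norm_sum_le _ _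
    _ ≤ #s * ∑ a ∈ s, ‖∑ b ∈ t, v a b‖ ^ 2 := sq_sum_le_card_mul_sum_sq
    _ ≤ _ := by gcongr; exact sum_norm_sum_sq_le_sum_sum_norm_sum_inner s t v

variable [Group Γ] [DecidableEq Γ]

lemma sum_mul_singleton {M : Type*} [AddCommMonoid M] (F : Finset Γ) (q : Γ) (φ : Γ → M) :
    ∑ p ∈ F * {q}, φ p = ∑ p ∈ F, φ (p * q) := by
  rw [Finset.mul_singleton]
  exact Finset.sum_image (mul_left_injective q).injOn

lemma sum_sum_inv_mul_le (Q : Finset Γ) {a : Γ → ℝ} (ha : ∀ k, 0 ≤ a k) :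
    ∑ q ∈ Q, ∑ q' ∈ Q, a (q⁻¹ * q') ≤ #Q * ∑ k ∈ Q⁻¹ * Q, a k := by
  rw [← nsmul_eq_mul]
  refine Finset.sum_le_card_nsmul _ _ _ fun q hq => ?_
  rw [← Finset.sum_image (f := a) (mul_right_injective q⁻¹).injOn]
  refine Finset.sum_le_sum_of_subset_of_nonneg ?_ fun k _ _ => ha k
  exact Finset.image_subset_iff.2 fun q' => Finset.mul_mem_mul (Finset.inv_mem_inv hq)

theorem van_der_Corput_inequality (F Q : Finset Γ) {φ : Γ → H} {C : ℝ} (hC : ∀ p, ‖φ p‖ ≤ C) :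
    #Q * ‖∑ p ∈ F, φ p‖ ≤ ∑ q ∈ Q, 2 * C * #(F \ (F * {q})) +
      √(#F * ∑ q ∈ Q, ∑ q' ∈ Q, ‖∑ p ∈ F, ⟪φ (p * q), φ (p * q')⟫_𝕜‖) := by
  have split : (#Q : ℕ) • ∑ p ∈ F, φ p =
      ∑ q ∈ Q, (∑ p ∈ F, φ p - ∑ p ∈ F * {q}, φ p) + ∑ p ∈ F, ∑ q ∈ Q, φ (p * q) := by
    rw [Finset.sum_comm (s := F)]
    simp [sum_mul_singleton]
  have shift : ‖∑ q ∈ Q, (∑ p ∈ F, φ p - ∑ p ∈ F * {q}, φ p)‖ ≤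
      ∑ q ∈ Q, 2 * C * #(F \ (F * {q})) :=
    norm_sum_le_of_le _ fun q _ =>
      norm_sum_sub_sum_le_of_card_eq (Finset.card_mul_singleton F q).symm hC
  calc #Q * ‖∑ p ∈ F, φ p‖
    _ = ‖#Q • ∑ p ∈ F, φ p‖ := by
      rw [← Nat.cast_smul_eq_nsmul 𝕜, norm_smul, RCLike.norm_natCast]
    _ ≤ _ := by
      rw [split]
      exact norm_add_le_of_le shift (Real.le_sqrt_of_sq_le (norm_sum_sum_sq_le_card_mul F Q _))

lemma norm_sum_le_of_correlation_le {F Q : Finset Γ} (hQ : Q.Nonempty) {φ : Γ → H} {C : ℝ}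
    (hC : ∀ p, ‖φ p‖ ≤ C) {a : Γ → ℝ} (ha : ∀ k, 0 ≤ a k) {η δ : ℝ}
    (hshift : ∀ q ∈ Q, 2 * C * #(F \ (F * {q})) ≤ η * #F)
    (hcorr : ∀ q ∈ Q, ∀ k ∈ Q⁻¹ * Q, ‖∑ p ∈ F * {q}, ⟪φ p, φ (p * k)⟫_𝕜‖ ≤ #F * (a k + δ))
    (hsum : ∑ k ∈ Q⁻¹ * Q, a k ≤ δ * #Q) :
    ‖∑ p ∈ F, φ p‖ ≤ (η + √(2 * δ)) * #F := by
  have corr_sum : ∑ q ∈ Q, ∑ q' ∈ Q, ‖∑ p ∈ F, ⟪φ (p * q), φ (p * q')⟫_𝕜‖ ≤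
      #F * (2 * δ * #Q ^ 2) :=
    calc ∑ q ∈ Q, ∑ q' ∈ Q, ‖∑ p ∈ F, ⟪φ (p * q), φ (p * q')⟫_𝕜‖
      _ ≤ ∑ q ∈ Q, ∑ q' ∈ Q, #F * (a (q⁻¹ * q') + δ) := by
        refine Finset.sum_le_sum fun q hq => Finset.sum_le_sum fun q' hq' => ?_
        simpa [sum_mul_singleton] using
          hcorr q hq (q⁻¹ * q') (Finset.mul_mem_mul (Finset.inv_mem_inv hq) hq')
      _ = #F * (∑ q ∈ Q, ∑ q' ∈ Q, a (q⁻¹ * q') + #Q * (#Q * δ)) := by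
        simp [← Finset.mul_sum, Finset.sum_add_distrib]
      _ ≤ #F * (#Q * (δ * #Q) + #Q * (#Q * δ)) := by
        gcongr
        exact (sum_sum_inv_mul_le Q ha).trans (by gcongr)
      _ = #F * (2 * δ * #Q ^ 2) := by ring
  have hQ' : (0 : ℝ) < #Q := mod_cast hQ.card_pos
  refine le_of_mul_le_mul_left ?_ hQ'
  calc #Q * ‖∑ p ∈ F, φ p‖
    _ ≤ ∑ q ∈ Q, 2 * C * #(F \ (F * {q})) +
        √(#F * ∑ q ∈ Q, ∑ q' ∈ Q, ‖∑ p ∈ F, ⟪φ (p * q), φ (p * q')⟫_𝕜‖) :=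
      van_der_Corput_inequality F Q hC
    _ ≤ ∑ _q ∈ Q, η * #F + √(#F * (#F * (2 * δ * #Q ^ 2))) := by
      refine add_le_add (Finset.sum_le_sum hshift) ?_
      gcongr
    _ = #Q * (η * #F) + √(2 * δ * (#F * #Q) ^ 2) := by
      rw [Finset.sum_const, nsmul_eq_mul]
      ring_nf
    _ = #Q * ((η + √(2 * δ)) * #F) := by
      rw [Real.sqrt_mul' _ (sq_nonneg _), Real.sqrt_sq (by positivity)]
      ring

end FiniteSums

section Folner

variable {ι Γ G₁ G₂ H 𝕜 : Type*} {l : Filter ι} [Group Γ] [DecidableEq Γ] [Group G₁]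
  [DecidableEq G₁] [Group G₂] [DecidableEq G₂] [RCLike 𝕜] [SeminormedAddCommGroup H]
  [InnerProductSpace 𝕜 H] [NormedSpace ℝ H]

lemma card_mul_singleton_sdiff_of_commute (F : Finset Γ) {c q : Γ} (hcq : Commute c q) :
    #((F * {c}) \ (F * {c} * {q})) = #(F \ (F * {q})) := by
  rw [mul_assoc, Finset.singleton_mul_singleton, hcq.eq, ← Finset.singleton_mul_singleton,
    ← mul_assoc, Finset.mul_singleton c, Finset.mul_singleton c, ← Finset.smul_finset_sdiff,
    Finset.card_smul_finset]

lemma norm_sum_le_card_mul_of_norm_average_sub_le {α : Type*} {s t : Finset α}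
    (hst : #t = #s) {u : α → 𝕜} {z : 𝕜} {δ : ℝ}
    (h : ‖(#s : ℝ)⁻¹ • ∑ p ∈ t, u p - z‖ ≤ δ) : ‖∑ p ∈ t, u p‖ ≤ #s * (‖z‖ + δ) := by
  rcases s.eq_empty_or_nonempty with rfl | hs
  · simp [Finset.card_eq_zero.1 hst]
  have hs' : (0 : ℝ) < #s := mod_cast hs.card_pos
  rw [← inv_mul_le_iff₀ hs']
  calc (#s : ℝ)⁻¹ * ‖∑ p ∈ t, u p‖
    _ = ‖(#s : ℝ)⁻¹ • ∑ p ∈ t, u p‖ := by simp [norm_smul]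
    _ ≤ ‖z‖ + δ := by linarith [norm_le_norm_add_norm_sub' ((#s : ℝ)⁻¹ • ∑ p ∈ t, u p) z]

theorem eventually_norm_average_le_of_correlation {K : Set Γ} (hKmul : ∀ g ∈ K, ∀ h ∈ K, g * h ∈ K)
    (hKcomm : ∀ g ∈ K, ∀ h ∈ K, g * h = h * g) {F : ι → Finset Γ}
    (hF : ∀ k ∈ K, (fun i => (#(F i \ (F i * {k})) : ℝ)) =o[l] fun i => (#(F i) : ℝ))
    {f : Γ → H} {C : ℝ} (hC : ∀ p, ‖f p‖ ≤ C) {γ : Γ → 𝕜}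
    (hγ : ∀ ε > (0 : ℝ), ∃ Q : Finset Γ, Q.Nonempty ∧ ↑Q ⊆ K ∧ ∑ k ∈ Q⁻¹ * Q, ‖γ k‖ ≤ ε * #Q)
    (hcorr : ∀ k, ∀ ε > (0 : ℝ), ∀ᶠ i in l, ∀ c ∈ K,
      ‖(#(F i) : ℝ)⁻¹ • ∑ p ∈ F i * {c}, ⟪f p, f (p * k)⟫_𝕜 - γ k‖ ≤ ε) :
    ∀ ε > (0 : ℝ), ∀ᶠ i in l, ∀ c ∈ K, ‖(#(F i) : ℝ)⁻¹ • ∑ p ∈ F i * {c}, f p‖ ≤ ε := by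
  intro ε hε
  obtain ⟨Q, hQ, hQK, hQγ⟩ := hγ (ε ^ 2 / 8) (by positivity)
  have hshift : ∀ᶠ i in l, ∀ q ∈ Q, 2 * C * #(F i \ (F i * {q})) ≤ ε / 2 * #(F i) := by
    refine (eventually_all_finset Q).2 fun q hq => ?_
    filter_upwards [((hF q (hQK hq)).const_mul_left (2 * C)).def (half_pos hε)] with i hi
    simpa using (le_abs_self _).trans hi
  have hcorrQ := (eventually_all_finset (Q⁻¹ * Q)).2 fun k _ =>
    hcorr k (ε ^ 2 / 8) (by positivity)
  filter_upwards [hshift, hcorrQ] with i hshift hcorrQ c hc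
  have bound : ‖∑ p ∈ F i * {c}, f p‖ ≤ (ε / 2 + √(2 * (ε ^ 2 / 8))) * #(F i * {c}) := by
    refine norm_sum_le_of_correlation_le (𝕜 := 𝕜) hQ hC (fun k => norm_nonneg (γ k))
      (fun q hq => ?_) (fun q hq k hk => ?_) hQγ
    · rw [card_mul_singleton_sdiff_of_commute _ (hKcomm c hc q (hQK hq)),
        Finset.card_mul_singleton]
      exact hshift q hq
    · rw [mul_assoc, Finset.singleton_mul_singleton, Finset.card_mul_singleton]
      exact norm_sum_le_card_mul_of_norm_average_sub_le (Finset.card_mul_singleton _ _)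
        (hcorrQ k hk (c * q) (hKmul c hc q (hQK hq)))
  have sqrt_eq : √(2 * (ε ^ 2 / 8)) = ε / 2 := by
    rw [show 2 * (ε ^ 2 / 8) = (ε / 2) ^ 2 by ring, Real.sqrt_sq (by positivity)]
  rw [sqrt_eq, add_halves, Finset.card_mul_singleton, mul_comm] at bound
  rw [norm_smul, norm_inv, RCLike.norm_natCast]
  exact inv_mul_le_of_le_mul₀ (by positivity) hε.le bound

lemma card_product_sdiff_product_le {α β : Type*} [DecidableEq α] [DecidableEq β] (s s' : Finset α)
    (t t' : Finset β) :
    #((s ×ˢ t) \ (s' ×ˢ t')) ≤ #s * #(t \ t') + #(s \ s') * #t := by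
  have hsub : (s ×ˢ t) \ (s' ×ˢ t') ⊆ s ×ˢ (t \ t') ∪ (s \ s') ×ˢ t := by
    intro p
    simp only [Finset.mem_sdiff, Finset.mem_product, Finset.mem_union]
    tauto
  simpa using (Finset.card_le_card hsub).trans (Finset.card_union_le _ _)

lemma isLittleO_card_product_sdiff_mul_singleton {A : ι → Finset G₁} {B : ι → Finset G₂}
    {k : G₂ × G₁}
    (hA : (fun i => (#(A i \ (A i * {k.2})) : ℝ)) =o[l] fun i => (#(A i) : ℝ))
    (hB : (fun i => (#(B i \ (B i * {k.1})) : ℝ)) =o[l] fun i => (#(B i) : ℝ)) :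
    (fun i => (#((B i ×ˢ A i) \ ((B i ×ˢ A i) * {k})) : ℝ)) =o[l]
      fun i => (#(B i ×ˢ A i) : ℝ) := by
  have hsum : (fun i => (#(B i) * #(A i \ (A i * {k.2})) + #(B i \ (B i * {k.1})) * #(A i) : ℝ))
      =o[l] fun i => (#(B i) * #(A i) : ℝ) :=
    ((isBigO_refl _ l).mul_isLittleO hA).add (hB.mul_isBigO (isBigO_refl _ l))
  simp_rw [Finset.card_product, Nat.cast_mul]
  refine (IsBigO.of_norm_le fun i => ?_).trans_isLittleO hsum
  rw [← Prod.mk.eta (p := k), ← Finset.singleton_product_singleton,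
    Finset.product_mul_product_comm, RCLike.norm_natCast]
  exact mod_cast card_product_sdiff_product_le _ _ _ _

end Folner

section CountingMeasure

variable {X X₁ X₂ E H 𝕜 : Type*} [MeasurableSpace X] [MeasurableSpace X₁] [MeasurableSpace X₂]
  [NormedAddCommGroup E] [NormedSpace ℝ E] [CompleteSpace E] [RCLike 𝕜] [NormedAddCommGroup H]
  [InnerProductSpace 𝕜 H]

lemma eqOn_of_ae_eq_restrict_count {Y : Type*} {S : Set X} (hS : MeasurableSet S) {φ ψ : X → Y}
    (h : φ =ᵐ[Measure.count.restrict S] ψ) : Set.EqOn φ ψ S := by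
  intro x hx
  by_contra hne
  have hnull : Measure.count {x | ¬(x ∈ S → φ x = ψ x)} = 0 := (ae_restrict_iff' hS).1 h
  rw [Measure.count_eq_zero_iff] at hnull
  exact Set.eq_empty_iff_forall_notMem.1 hnull x fun h => hne (h hx)

lemma restrict_count_coe_finset {S : Finset X} (hS : MeasurableSet (S : Set X)) :
    Measure.count.restrict (S : Set X) = ∑ x ∈ S, Measure.dirac x := by
  classical
  ext t ht
  have hinter : t ∩ S = (S.filter (· ∈ t) : Finset X) := by
    ext x
    simp [and_comm]
  have hmeas := ht.inter hS
  rw [Measure.restrict_apply ht, hinter, Measure.count_apply_finset' (hinter ▸ hmeas)]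
  simp [Measure.dirac_apply' _ ht, Set.indicator_apply]

lemma setIntegral_count_coe_finset {S : Finset X} (hS : MeasurableSet (S : Set X)) {φ : X → E}
    (hφ : StronglyMeasurable φ) :
    ∫ x in (S : Set X), φ x ∂Measure.count = ∑ x ∈ S, φ x := by
  rw [restrict_count_coe_finset hS, integral_finsetSum_measure]
  · exact Finset.sum_congr rfl fun x _ => integral_dirac' _ _ hφ
  · refine fun x _ => ⟨hφ.aestronglyMeasurable, ?_⟩
    rw [HasFiniteIntegral, lintegral_dirac' _ hφ.enorm]
    exact enorm_lt_top

lemma setIntegral_setIntegral_count_coe_finset {S : Finset X₁} {T : Finset X₂}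
    (hS : MeasurableSet (S : Set X₁)) (hT : MeasurableSet (T : Set X₂)) {φ : X₂ × X₁ → E}
    (hφ : AEStronglyMeasurable φ (Measure.count.restrict ↑(T ×ˢ S))) :
    ∫ h in (S : Set X₁), ∫ g in (T : Set X₂), φ (g, h) ∂Measure.count ∂Measure.count =
      ∑ p ∈ T ×ˢ S, φ p := by
  obtain ⟨ψ, hψ, hφψ⟩ := hφ
  have heq : Set.EqOn φ ψ ↑(T ×ˢ S) :=
    eqOn_of_ae_eq_restrict_count (by simpa using hT.prod hS) hφψ
  have inner_eq : ∀ h ∈ (S : Set X₁),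
      ∫ g in (T : Set X₂), φ (g, h) ∂Measure.count = ∑ g ∈ T, ψ (g, h) := fun h hh =>
    (setIntegral_congr_fun hT fun g hg => heq (Finset.mem_product.2 ⟨hg, hh⟩)).trans
      (setIntegral_count_coe_finset hT (hψ.comp_measurable measurable_prodMk_right))
  calc ∫ h in (S : Set X₁), ∫ g in (T : Set X₂), φ (g, h) ∂Measure.count ∂Measure.count
    _ = ∫ h in (S : Set X₁), ∑ g ∈ T, ψ (g, h) ∂Measure.count :=
      setIntegral_congr_fun hS inner_eq
    _ = ∑ h ∈ S, ∑ g ∈ T, ψ (g, h) :=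
      setIntegral_count_coe_finset hS <| Finset.stronglyMeasurable_fun_sum T fun g _ =>
        hψ.comp_measurable measurable_prodMk_left
    _ = ∑ p ∈ T ×ˢ S, φ p := by
      rw [← Finset.sum_product_right', Finset.sum_congr rfl heq]

lemma count_inv_smul_setIntegral_setIntegral {A S : Finset X₁} {B T : Finset X₂}
    (hA : MeasurableSet (A : Set X₁)) (hB : MeasurableSet (B : Set X₂))
    (hS : MeasurableSet (S : Set X₁)) (hT : MeasurableSet (T : Set X₂)) {φ : X₂ × X₁ → E}
    (hφ : AEStronglyMeasurable φ (Measure.count.restrict ↑(T ×ˢ S))) :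
    ((Measure.count (A : Set X₁)).toReal * (Measure.count (B : Set X₂)).toReal)⁻¹ •
        ∫ h in (S : Set X₁), ∫ g in (T : Set X₂), φ (g, h) ∂Measure.count ∂Measure.count =
      (#(B ×ˢ A) : ℝ)⁻¹ • ∑ p ∈ T ×ˢ S, φ p := by
  rw [setIntegral_setIntegral_count_coe_finset hS hT hφ, Measure.count_apply_finset' hA,
    Measure.count_apply_finset' hB, Finset.card_product]
  simp [mul_comm]

lemma stronglyMeasurable_of_measurable_inner_of_countable_range {f : X → H}
    (hrange : (Set.range f).Countable) (hf : ∀ v, Measurable fun x => ⟪f x, v⟫_𝕜) :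
    StronglyMeasurable f := by
  borelize H
  have hfiber : ∀ x, MeasurableSet {y | f y = f x} := fun x => by
    have heq : {y | f y = f x} = ⋂ v ∈ Set.range f, {y | ⟪f y, v⟫_𝕜 = ⟪f x, v⟫_𝕜} := by
      ext y
      simp only [Set.mem_ofPred_eq, Set.mem_iInter, Set.forall_mem_range]
      refine ⟨fun h z => by rw [h], fun h => ?_⟩
      rw [← sub_eq_zero, ← inner_self_eq_zero (𝕜 := 𝕜), inner_sub_right, inner_sub_left,
        inner_sub_left, h y, h x, sub_self, sub_self, sub_zero]
    rw [heq]
    exact .biInter hrange fun v _ => measurableSet_eq_fun (hf v) measurable_const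
  have hmeas : Measurable f := fun A _ => by
    have heq : f ⁻¹' A = ⋃ v ∈ Set.range f ∩ A, f ⁻¹' {v} := by
      rw [← Set.preimage_range_inter, Set.biUnion_preimage_singleton]
    rw [heq]
    refine .biUnion (hrange.mono Set.inter_subset_left) ?_
    rintro _ ⟨⟨x, rfl⟩, -⟩
    exact hfiber x
  exact stronglyMeasurable_iff_measurable_separable.2 ⟨hmeas, hrange.isSeparable⟩

lemma aestronglyMeasurable_restrict_of_measurable_inner {S : Set X} (hS : MeasurableSet S)
    (hfin : S.Finite) {f : X → H} (hf : ∀ v, Measurable fun x => ⟪f x, v⟫_𝕜) (μ : Measure X) :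
    AEStronglyMeasurable f (μ.restrict S) := by
  have hrange : (Set.range (S.indicator f)).Countable :=
    (((hfin.image f).insert 0).subset <| Set.range_subset_iff.2 fun x => by
      by_cases hx : x ∈ S
      · exact Or.inr ⟨x, hx, (Set.indicator_of_mem hx f).symm⟩
      · exact Or.inl (Set.indicator_of_notMem hx f)).countable
  have hinner : ∀ v, Measurable fun x => ⟪S.indicator f x, v⟫_𝕜 := fun v => by
    convert (hf v).indicator hS with x
    by_cases hx : x ∈ S <;> simp [hx]
  rw [← aestronglyMeasurable_indicator_iff hS]
  exact (stronglyMeasurable_of_measurable_inner_of_countable_range hrange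
    hinner).aestronglyMeasurable

end CountingMeasure

section MeasurableGroup

variable {ι G G₁ G₂ H 𝕜 : Type*} {l : Filter ι} [Group G] [MeasurableSpace G]
  [Group G₁] [MeasurableSpace G₁] [MeasurableMul G₁] [Group G₂] [MeasurableSpace G₂]
  [MeasurableMul G₂] [RCLike 𝕜] [NormedAddCommGroup H] [InnerProductSpace 𝕜 H]

instance instMeasurableMulProd : MeasurableMul (G₁ × G₂) where
  measurable_const_mul c := (measurable_const_mul c.1).prodMap (measurable_const_mul c.2)
  measurable_mul_const c := (measurable_mul_const c.1).prodMap (measurable_mul_const c.2)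

lemma measurableSet_coe_mul_singleton [MeasurableMul G] [DecidableEq G] {A : Finset G}
    (hA : MeasurableSet (A : Set G)) (c : G) : MeasurableSet (↑(A * {c}) : Set G) := by
  rw [Finset.mul_singleton, Finset.coe_smul_finset]
  exact hA.const_smul _

lemma measurableSet_coe_mul [MeasurableMul G] [DecidableEq G] (S : Finset G) {T : Finset G}
    (hT : MeasurableSet (T : Set G)) : MeasurableSet (↑(S * T) : Set G) := by
  rw [Finset.coe_mul, ← smul_eq_mul, ← Set.iUnion_smul_set]
  exact S.finite_toSet.measurableSet_biUnion fun a _ => hT.const_smul a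

/-- `Λ` is a (right) Følner sequence in the subsemigroup `K` with respect to `μ`. It is indexed by
an arbitrary filter, and `Λ i` has to be a measurable subset of `K` only eventually. -/
structure IsRightFolnerIn (μ : Measure G) (K : Set G) (Λ : ι → Set G) (l : Filter ι) : Prop where
  eventually_measurableSet : ∀ᶠ i in l, MeasurableSet (Λ i)
  eventually_subset : ∀ᶠ i in l, Λ i ⊆ K
  eventually_measure_pos_lt_top : ∀ᶠ i in l, 0 < μ (Λ i) ∧ μ (Λ i) < ⊤
  tendsto_measure_symmDiff : ∀ g ∈ K,
    Tendsto (fun i => (μ (symmDiff (Λ i) (Λ i * {g}))).toReal / (μ (Λ i)).toReal) l (𝓝 0)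

namespace IsRightFolnerIn

variable {K : Set G} {Λ : ι → Set G}

lemma congr {Λ' : ι → Set G} {μ : Measure G} (hΛ : IsRightFolnerIn μ K Λ l) (h : Λ =ᶠ[l] Λ') :
    IsRightFolnerIn μ K Λ' l where
  eventually_measurableSet := by
    filter_upwards [h, hΛ.eventually_measurableSet] with i hi hm using hi ▸ hm
  eventually_subset := by
    filter_upwards [h, hΛ.eventually_subset] with i hi hs using hi ▸ hs
  eventually_measure_pos_lt_top := by
    filter_upwards [h, hΛ.eventually_measure_pos_lt_top] with i hi hμ using hi ▸ hμ
  tendsto_measure_symmDiff g hg := (hΛ.tendsto_measure_symmDiff g hg).congr' <| by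
    filter_upwards [h] with i hi
    rw [hi]

lemma exists_finset [l.NeBot] (hΛ : IsRightFolnerIn Measure.count K Λ l) :
    ∃ F : ι → Finset G, Λ =ᶠ[l] fun i => ↑(F i) := by
  refine Eventually.choice (r := fun i (F : Finset G) => Λ i = F) ?_
  filter_upwards [hΛ.eventually_measurableSet, hΛ.eventually_measure_pos_lt_top]
    with i hmeas hcount
  have hfin : (Λ i).Finite := (Measure.count_apply_lt_top' hmeas).1 hcount.2
  exact ⟨hfin.toFinset, hfin.coe_toFinset.symm⟩

variable {F : ι → Finset G}

lemma eventually_nonempty (hF : IsRightFolnerIn Measure.count K (fun i => ↑(F i)) l) :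
    ∀ᶠ i in l, (F i).Nonempty := by
  filter_upwards [hF.eventually_measure_pos_lt_top] with i hi
  exact Finset.coe_nonempty.1 (Measure.count_ne_zero_iff.1 hi.1.ne')

lemma isLittleO_card_sdiff [MeasurableMul G] [DecidableEq G]
    (hF : IsRightFolnerIn Measure.count K (fun i => ↑(F i)) l) {g : G} (hg : g ∈ K) :
    (fun i => (#(F i \ (F i * {g})) : ℝ)) =o[l] fun i => (#(F i) : ℝ) := by
  refine IsLittleO.of_bound fun ε hε => ?_
  filter_upwards [hF.eventually_measurableSet, hF.eventually_nonempty,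
    (hF.tendsto_measure_symmDiff g hg).eventually_le_const hε] with i hmeas hne hle
  have hmeas_symmDiff := hmeas.symmDiff (measurableSet_coe_mul_singleton hmeas g)
  rw [← Finset.coe_symmDiff] at hmeas_symmDiff
  rw [← Finset.coe_singleton, ← Finset.coe_mul, ← Finset.coe_symmDiff,
    Measure.count_apply_finset' hmeas_symmDiff, Measure.count_apply_finset' hmeas,
    ENNReal.toReal_natCast, ENNReal.toReal_natCast,
    div_le_iff₀ (mod_cast hne.card_pos)] at hle
  rw [RCLike.norm_natCast, RCLike.norm_natCast]
  refine le_trans ?_ hle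
  exact mod_cast Finset.card_le_card le_sup_left

end IsRightFolnerIn

end MeasurableGroup

section Correlation

variable {ι Γ G₁ G₂ E H 𝕜 : Type*} {l : Filter ι} [Group Γ] [MeasurableSpace Γ] [MeasurableMul Γ]
  [Group G₁] [MeasurableSpace G₁] [MeasurableMul G₁] [Group G₂] [MeasurableSpace G₂]
  [MeasurableMul G₂] [NormedAddCommGroup E] [NormedSpace ℝ E] [CompleteSpace E] [RCLike 𝕜]
  [NormedAddCommGroup H] [InnerProductSpace 𝕜 H]

lemma aestronglyMeasurable_inner_mul_const {S : Set Γ} (hS : MeasurableSet S) (hfin : S.Finite)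
    {f : Γ → H} (hf : ∀ v, Measurable fun p => ⟪f p, v⟫_𝕜) (k : Γ) (μ : Measure Γ) :
    AEStronglyMeasurable (fun p => ⟪f p, f (p * k)⟫_𝕜) (μ.restrict S) :=
  (aestronglyMeasurable_restrict_of_measurable_inner hS hfin hf μ).inner <|
    aestronglyMeasurable_restrict_of_measurable_inner hS hfin
      (fun v => (hf v).comp (measurable_mul_const k)) μ

lemma measurable_of_tendsto_average_inner [l.NeBot] [l.IsCountablyGenerated] {F : ι → Finset Γ}
    {f : Γ → H} (hf : ∀ v, Measurable fun p => ⟪f p, v⟫_𝕜) {γ : Γ → 𝕜}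
    (hγ : ∀ k, Tendsto (fun i => (#(F i) : ℝ)⁻¹ • ∑ p ∈ F i, ⟪f p, f (p * k)⟫_𝕜) l (𝓝 (γ k))) :
    Measurable γ := by
  have hinner : ∀ p, Measurable fun k => ⟪f p, f (p * k)⟫_𝕜 := fun p => by
    simp_rw [← inner_conj_symm (f p)]
    exact RCLike.continuous_conj.measurable.comp ((hf (f p)).comp (measurable_const_mul p))
  exact measurable_of_tendsto_metrizable' l
    (fun i => (Finset.measurable_fun_sum (F i) fun p _ => hinner p).const_smul (#(F i) : ℝ)⁻¹)
    (tendsto_pi_nhds.2 hγ)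

variable [DecidableEq G₁] [DecidableEq G₂]

lemma count_inv_smul_setIntegral_mul_singleton {A : Finset G₁} {B : Finset G₂}
    (hA : MeasurableSet (A : Set G₁)) (hB : MeasurableSet (B : Set G₂)) (c : G₂ × G₁)
    {φ : G₂ × G₁ → E}
    (hφ : AEStronglyMeasurable φ (Measure.count.restrict ↑((B ×ˢ A) * {c}))) :
    ((Measure.count (A : Set G₁)).toReal * (Measure.count (B : Set G₂)).toReal)⁻¹ •
        ∫ h in (A : Set G₁) * {c.2}, ∫ g in (B : Set G₂) * {c.1},
          φ (g, h) ∂Measure.count ∂Measure.count =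
      (#(B ×ˢ A) : ℝ)⁻¹ • ∑ p ∈ (B ×ˢ A) * {c}, φ p := by
  have hmul : (B ×ˢ A) * {c} = (B * {c.1}) ×ˢ (A * {c.2}) := by
    rw [← Finset.product_mul_product_comm, Finset.singleton_product_singleton]
  rw [hmul] at hφ ⊢
  simpa only [Finset.coe_mul, Finset.coe_singleton] using
    count_inv_smul_setIntegral_setIntegral hA hB (measurableSet_coe_mul_singleton hA c.2)
      (measurableSet_coe_mul_singleton hB c.1) hφ

lemma count_inv_mul_setIntegral_inv_mul {A : Finset G₁} {B : Finset G₂}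
    (hA : MeasurableSet (A : Set G₁)) (hB : MeasurableSet (B : Set G₂)) {φ : G₂ × G₁ → ℝ}
    (hφ : Measurable φ) :
    ((Measure.count (A : Set G₁)).toReal * (Measure.count (B : Set G₂)).toReal)⁻¹ *
        ∫ h in (A : Set G₁)⁻¹ * (A : Set G₁), ∫ g in (B : Set G₂)⁻¹ * (B : Set G₂),
          φ (g, h) ∂Measure.count ∂Measure.count =
      (#(B ×ˢ A) : ℝ)⁻¹ * ∑ k ∈ (B ×ˢ A)⁻¹ * (B ×ˢ A), φ k := by
  rw [Finset.inv_product, Finset.product_mul_product_comm]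
  simpa only [Finset.coe_mul, Finset.coe_inv, smul_eq_mul] using
    count_inv_smul_setIntegral_setIntegral hA hB (measurableSet_coe_mul A⁻¹ hA)
      (measurableSet_coe_mul B⁻¹ hB) hφ.aestronglyMeasurable

lemma IsRightFolnerIn.exists_finset_sum_norm_le_mul_card [l.NeBot] {K₁ : Set G₁} {K₂ : Set G₂}
    {A : ι → Finset G₁} {B : ι → Finset G₂}
    (hA : IsRightFolnerIn Measure.count K₁ (fun i => ↑(A i)) l)
    (hB : IsRightFolnerIn Measure.count K₂ (fun i => ↑(B i)) l)
    {γ : G₂ × G₁ → 𝕜} (hγ : Measurable γ)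
    (hγzero : Tendsto
      (fun i => ((Measure.count (A i : Set G₁)).toReal * (Measure.count (B i : Set G₂)).toReal)⁻¹ *
        ∫ h in (A i : Set G₁)⁻¹ * (A i : Set G₁), ∫ g in (B i : Set G₂)⁻¹ * (B i : Set G₂),
          ‖γ (g, h)‖ ∂Measure.count ∂Measure.count)
      l (𝓝 0)) :
    ∀ ε > (0 : ℝ), ∃ Q : Finset (G₂ × G₁), Q.Nonempty ∧ ↑Q ⊆ K₂ ×ˢ K₁ ∧
      ∑ k ∈ Q⁻¹ * Q, ‖γ k‖ ≤ ε * #Q := by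
  intro ε hε
  suffices h : ∀ᶠ i in l, (B i ×ˢ A i).Nonempty ∧ ↑(B i ×ˢ A i) ⊆ K₂ ×ˢ K₁ ∧
      ∑ k ∈ (B i ×ˢ A i)⁻¹ * (B i ×ˢ A i), ‖γ k‖ ≤ ε * #(B i ×ˢ A i) from
    h.exists.imp' _ fun _ => id
  filter_upwards [hA.eventually_measurableSet, hB.eventually_measurableSet, hA.eventually_nonempty,
    hB.eventually_nonempty, hA.eventually_subset, hB.eventually_subset,
    hγzero.eventually_le_const hε] with i hAi hBi hAne hBne hAK hBK hle
  have hne : (B i ×ˢ A i).Nonempty := hBne.product hAne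
  rw [count_inv_mul_setIntegral_inv_mul hAi hBi hγ.norm,
    inv_mul_le_iff₀ (mod_cast hne.card_pos), mul_comm _ ε] at hle
  exact ⟨hne, by simpa using Set.prod_mono hBK hAK, hle⟩

lemma measurableSet_coe_product_mul_singleton {A : Finset G₁} {B : Finset G₂}
    (hA : MeasurableSet (A : Set G₁)) (hB : MeasurableSet (B : Set G₂)) (c : G₂ × G₁) :
    MeasurableSet (↑((B ×ˢ A) * {c}) : Set (G₂ × G₁)) :=
  measurableSet_coe_mul_singleton (by simpa using hB.prod hA) c

lemma count_inv_smul_setIntegral_inner_mul_singleton {A : Finset G₁} {B : Finset G₂}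
    (hA : MeasurableSet (A : Set G₁)) (hB : MeasurableSet (B : Set G₂)) {f : G₂ × G₁ → H}
    (hf : ∀ v, Measurable fun p => ⟪f p, v⟫_𝕜) (c k : G₂ × G₁) :
    ((Measure.count (A : Set G₁)).toReal * (Measure.count (B : Set G₂)).toReal)⁻¹ •
        ∫ h in (A : Set G₁) * {c.2}, ∫ g in (B : Set G₂) * {c.1},
          ⟪f (g, h), f (g * k.1, h * k.2)⟫_𝕜 ∂Measure.count ∂Measure.count =
      (#(B ×ˢ A) : ℝ)⁻¹ • ∑ p ∈ (B ×ˢ A) * {c}, ⟪f p, f (p * k)⟫_𝕜 :=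
  count_inv_smul_setIntegral_mul_singleton hA hB c <|
    aestronglyMeasurable_inner_mul_const (measurableSet_coe_product_mul_singleton hA hB c)
      (Finset.finite_toSet _) hf k _

end Correlation

theorem uniform_two_parameter_van_der_Corput_general {ι G₁ G₂ H 𝕜 : Type*} {l : Filter ι}
    [l.NeBot] [l.IsCountablyGenerated] [Group G₁] [MeasurableSpace G₁] [MeasurableMul G₁]
    [Group G₂] [MeasurableSpace G₂] [MeasurableMul G₂] [RCLike 𝕜] [NormedAddCommGroup H]
    [InnerProductSpace 𝕜 H] [NormedSpace ℝ H] [CompleteSpace H]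
    {K₁ : Set G₁} (hK₁mul : ∀ g ∈ K₁, ∀ h ∈ K₁, g * h ∈ K₁)
    (hK₁comm : ∀ g ∈ K₁, ∀ h ∈ K₁, g * h = h * g)
    {K₂ : Set G₂} (hK₂mul : ∀ g ∈ K₂, ∀ h ∈ K₂, g * h ∈ K₂)
    (hK₂comm : ∀ g ∈ K₂, ∀ h ∈ K₂, g * h = h * g)
    {Λ₁ : ι → Set G₁} (hΛ₁ : IsRightFolnerIn Measure.count K₁ Λ₁ l)
    {Λ₂ : ι → Set G₂} (hΛ₂ : IsRightFolnerIn Measure.count K₂ Λ₂ l)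
    {f : G₂ × G₁ → H} (hbdd : ∃ C : ℝ, ∀ p, ‖f p‖ ≤ C)
    (hweak : ∀ v, Measurable fun p => ⟪f p, v⟫_𝕜) {γ : G₂ × G₁ → 𝕜}
    (hγ : ∀ g' h', Tendsto
      (fun i => ((Measure.count (Λ₁ i)).toReal * (Measure.count (Λ₂ i)).toReal)⁻¹ •
        ∫ h in Λ₁ i, ∫ g in Λ₂ i,
          ⟪f (g, h), f (g * g', h * h')⟫_𝕜 ∂Measure.count ∂Measure.count)
      l (𝓝 (γ (g', h'))))
    (hγzero : Tendsto
      (fun i => ((Measure.count (Λ₁ i)).toReal * (Measure.count (Λ₂ i)).toReal)⁻¹ *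
        ∫ h in (Λ₁ i)⁻¹ * Λ₁ i, ∫ g in (Λ₂ i)⁻¹ * Λ₂ i,
          ‖γ (g, h)‖ ∂Measure.count ∂Measure.count)
      l (𝓝 0))
    (hγunif : ∀ g' h', ∀ ε > (0 : ℝ), ∀ᶠ i in l, ∀ g₁ ∈ K₁, ∀ g₂ ∈ K₂,
      ‖((Measure.count (Λ₁ i)).toReal * (Measure.count (Λ₂ i)).toReal)⁻¹ •
          (∫ h in Λ₁ i * {g₁}, ∫ g in Λ₂ i * {g₂},
            ⟪f (g, h), f (g * g', h * h')⟫_𝕜 ∂Measure.count ∂Measure.count)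
        - γ (g', h')‖ ≤ ε) :
    ∀ ε > (0 : ℝ), ∀ᶠ i in l, ∀ g₁ ∈ K₁, ∀ g₂ ∈ K₂,
      ‖((Measure.count (Λ₁ i)).toReal * (Measure.count (Λ₂ i)).toReal)⁻¹ •
          ∫ h in Λ₁ i * {g₁}, ∫ g in Λ₂ i * {g₂},
            f (g, h) ∂Measure.count ∂Measure.count‖ ≤ ε := by
  classical
  obtain ⟨C, hC⟩ := hbdd
  obtain ⟨A, hΛA⟩ := hΛ₁.exists_finset
  obtain ⟨B, hΛB⟩ := hΛ₂.exists_finset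
  have hA := hΛ₁.congr hΛA
  have hB := hΛ₂.congr hΛB
  have hmeas := hA.eventually_measurableSet.and hB.eventually_measurableSet
  have hγmeas : Measurable γ := by
    refine measurable_of_tendsto_average_inner (F := fun i => B i ×ˢ A i) hweak fun k =>
      (hγ k.1 k.2).congr' ?_
    filter_upwards [hΛA, hΛB, hmeas] with i hi₁ hi₂ ⟨hAi, hBi⟩
    simpa [hi₁, hi₂, sum_mul_singleton] using
      count_inv_smul_setIntegral_inner_mul_singleton hAi hBi hweak 1 k
  have hγsmall := hA.exists_finset_sum_norm_le_mul_card hB hγmeas <| hγzero.congr' <| by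
    filter_upwards [hΛA, hΛB] with i hi₁ hi₂
    rw [hi₁, hi₂]
  have hcorr : ∀ k, ∀ ε > (0 : ℝ), ∀ᶠ i in l, ∀ c ∈ K₂ ×ˢ K₁,
      ‖(#(B i ×ˢ A i) : ℝ)⁻¹ • ∑ p ∈ (B i ×ˢ A i) * {c}, ⟪f p, f (p * k)⟫_𝕜 - γ k‖ ≤ ε :=
    fun k ε hε => by
      filter_upwards [hΛA, hΛB, hmeas, hγunif k.1 k.2 ε hε] with i hi₁ hi₂ ⟨hAi, hBi⟩ hle c hc
      rw [← count_inv_smul_setIntegral_inner_mul_singleton hAi hBi hweak, ← hi₁, ← hi₂]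
      exact hle c.2 hc.2 c.1 hc.1
  intro ε hε
  have havg := eventually_norm_average_le_of_correlation (K := K₂ ×ˢ K₁)
    (fun g hg h hh => ⟨hK₂mul _ hg.1 _ hh.1, hK₁mul _ hg.2 _ hh.2⟩)
    (fun g hg h hh => Prod.ext (hK₂comm _ hg.1 _ hh.1) (hK₁comm _ hg.2 _ hh.2))
    (fun k hk => isLittleO_card_product_sdiff_mul_singleton (hA.isLittleO_card_sdiff hk.2)
      (hB.isLittleO_card_sdiff hk.1)) hC hγsmall hcorr ε hε
  filter_upwards [hΛA, hΛB, hmeas, havg] with i hi₁ hi₂ ⟨hAi, hBi⟩ hle g₁ hg₁ g₂ hg₂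
  rw [hi₁, hi₂, count_inv_smul_setIntegral_mul_singleton hAi hBi (g₂, g₁) <|
    aestronglyMeasurable_restrict_of_measurable_inner
      (measurableSet_coe_product_mul_singleton hAi hBi _) (Finset.finite_toSet _) hweak _]
  exact hle (g₂, g₁) ⟨hg₂, hg₁⟩

/-- **Corollary 5.2(2), the uniform two-parameter "van der Corput" lemma** (counting
measure case). -/
theorem uniform_two_parameter_van_der_Corput
    -- a countable second countable topological group G whose counting measure on the
    -- Borel σ-algebra is right and left invariant
    {G : Type*} [Group G] [Countable G] [TopologicalSpace G] [IsTopologicalGroup G]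
    [SecondCountableTopology G] [MeasurableSpace G] [BorelSpace G]
    (hRight : ∀ (V : Set G) (g : G), MeasurableSet V →
      Measure.count (V * {g}) = Measure.count V)
    (hLeft : ∀ (V : Set G) (g : G), MeasurableSet V →
      Measure.count ({g} * V) = Measure.count V)
    -- a Borel measurable abelian subsemigroup K of G
    (K : Set G) (hKmeas : MeasurableSet K) (hKmul : ∀ g ∈ K, ∀ h ∈ K, g * h ∈ K)
    (hKcomm : ∀ g ∈ K, ∀ h ∈ K, g * h = h * g)
    -- uniform Følner sequences (Λ1 n) and (Λ2 n) in K
    (Λ1 Λ2 : ℕ → Set G)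
    (hΛ1meas : ∀ n, MeasurableSet (Λ1 n) ∧ Λ1 n ⊆ K)
    (hΛ1fin : ∀ᶠ n in atTop, 0 < Measure.count (Λ1 n) ∧ Measure.count (Λ1 n) < ⊤)
    (hΛ1folner : ∀ g ∈ K, Tendsto
      (fun n => (Measure.count (symmDiff (Λ1 n) (Λ1 n * {g}))).toReal /
        (Measure.count (Λ1 n)).toReal) atTop (𝓝 0))
    (hΛ1unif : ∀ᶠ m in atTop, ∀ ε > (0 : ℝ), ∀ᶠ n in atTop, ∀ g ∈ Λ1 m,
      (Measure.count (symmDiff (Λ1 n) (Λ1 n * {g}))).toReal ≤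
        ε * (Measure.count (Λ1 n)).toReal)
    (hΛ2meas : ∀ n, MeasurableSet (Λ2 n) ∧ Λ2 n ⊆ K)
    (hΛ2fin : ∀ᶠ n in atTop, 0 < Measure.count (Λ2 n) ∧ Measure.count (Λ2 n) < ⊤)
    (hΛ2folner : ∀ g ∈ K, Tendsto
      (fun n => (Measure.count (symmDiff (Λ2 n) (Λ2 n * {g}))).toReal /
        (Measure.count (Λ2 n)).toReal) atTop (𝓝 0))
    (hΛ2unif : ∀ᶠ m in atTop, ∀ ε > (0 : ℝ), ∀ᶠ n in atTop, ∀ g ∈ Λ2 m,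
      (Measure.count (symmDiff (Λ2 n) (Λ2 n * {g}))).toReal ≤
        ε * (Measure.count (Λ2 n)).toReal)
    -- a Hilbert space H and a bounded, weakly measurable function f : G² → H
    {H : Type*} [NormedAddCommGroup H] [InnerProductSpace ℂ H] [CompleteSpace H]
    (f : G × G → H) (hbdd : ∃ C : ℝ, ∀ p, ‖f p‖ ≤ C)
    (hweak : ∀ x : H, Measurable fun p : G × G => (inner ℂ (f p) x : ℂ))
    (hff : Measurable fun q : (G × G) × (G × G) => (inner ℂ (f q.1) (f q.2) : ℂ))
    -- γ (g', h') is the limit of the correlation averages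
    (γ : G × G → ℂ)
    (hγ : ∀ g' h' : G, Tendsto
      (fun n => ((Measure.count (Λ1 n)).toReal * (Measure.count (Λ2 n)).toReal)⁻¹ •
        ∫ h in Λ1 n, ∫ g in Λ2 n,
          (inner ℂ (f (g, h)) (f (g * g', h * h')) : ℂ) ∂Measure.count ∂Measure.count)
      atTop (𝓝 (γ (g', h'))))
    -- the van der Corput condition (5.4)
    (hγ0 : Tendsto
      (fun m => ((Measure.count (Λ1 m)).toReal * (Measure.count (Λ2 m)).toReal)⁻¹ *
        ∫ h in (Λ1 m)⁻¹ * Λ1 m, ∫ g in (Λ2 m)⁻¹ * Λ2 m,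
          ‖γ (g, h)‖ ∂Measure.count ∂Measure.count)
      atTop (𝓝 0))
    -- the uniform correlation hypothesis (in ε-form)
    (hγunif : ∀ g' h' : G, ∀ ε > (0 : ℝ), ∀ᶠ n in atTop, ∀ g₁ ∈ K, ∀ g₂ ∈ K,
      ‖((Measure.count (Λ1 n)).toReal * (Measure.count (Λ2 n)).toReal)⁻¹ •
          (∫ h in Λ1 n * {g₁}, ∫ g in Λ2 n * {g₂},
            (inner ℂ (f (g, h)) (f (g * g', h * h')) : ℂ) ∂Measure.count ∂Measure.count)
        - γ (g', h')‖ ≤ ε) :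
    -- conclusion (in ε-form)
    ∀ ε > (0 : ℝ), ∀ᶠ n in atTop, ∀ g₁ ∈ K, ∀ g₂ ∈ K,
      ‖((Measure.count (Λ1 n)).toReal * (Measure.count (Λ2 n)).toReal)⁻¹ •
          ∫ h in Λ1 n * {g₁}, ∫ g in Λ2 n * {g₂},
            f (g, h) ∂Measure.count ∂Measure.count‖ ≤ ε :=
  uniform_two_parameter_van_der_Corput_general hKmul hKcomm hKmul hKcomm
    ⟨.of_forall fun n => (hΛ1meas n).1, .of_forall fun n => (hΛ1meas n).2, hΛ1fin, hΛ1folner⟩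
    ⟨.of_forall fun n => (hΛ2meas n).1, .of_forall fun n => (hΛ2meas n).2, hΛ2fin, hΛ2folner⟩
    hbdd hweak hγ hγ0 hγunif
end

section
/- (recurrence corollary, non-uniform case) Let (A,ω,τ,G) be a weakly mixing C*-dynamical system with ω tracial, where G is a second countable topological group, Σ its Borel σ-algebra, μ a σ-finite right and left invariant measure, and (g,h,j,k) ↦ ω(τ_h(a₁) τ_g(a₂) τ_{gh}(a₃) τ_{jk}(a₄) τ_j(a₅) τ_k(a₆)) is Σ² × Σ²-measurable for all a₁,...,a₆ ∈ A. Assume uniform Følner sequences (Λ_{1,n}) and (Λ_{2,n}) in G satisfying the Tempel'man condition with (Λ_{1,n}⁻¹Λ_{1,n}) and (Λ_{2,n}⁻¹Λ_{2,n}) also Følner in G, and that (A,ω,τ,G) is asymptotically abelian with respect to (Λ_{1,n}). Then for any ε > 0 and any a, b, c, d ∈ A there is n₀ ∈ ℕ such that for every n > n₀ there exist g ∈ Λ_{2,n} and h ∈ Λ_{1,n} with |ω(τ_{gh}(a) τ_g(b) τ_h(c) d)| > |ω(a)ω(b)ω(c)ω(d)| − ε. -/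
/-!
Weak mixing yields finite families `s`, `t` in the group along which the translates of any given
observables are almost uncorrelated, hence almost orthogonal after centring; by Cauchy-Schwarz their
averages are then close to their means, uniformly against all test elements. For centred `a`, a
van der Corput estimate (Cauchy-Schwarz in `i`, traciality, then averaging over `s`) bounds the
double average of `ω (τ (s i * t j) a * τ (s i) b * τ (t j) c * d)`, so that for arbitrary `a` this
double average is within `ε` of `ω a * ω b * ω c * ω d`. All these estimates survive replacing `s`
and `t` by translates, and a Følner set far out in the sequence contains a translate of any given
finite set. One term of the double average over suitable translates is therefore the recurrence.
-/

open MeasureTheory Filter Topology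
open scoped Pointwise ComplexOrder

open scoped BigOperators

section State

variable {A : Type*} [CStarAlgebra A] [PartialOrder A] [StarOrderedRing A] {ω : A →ₚ[ℂ] ℂ}

theorem norm_toPreGNS_le (hω : ω 1 = 1) (x : A) : ‖ω.toPreGNS x‖ ≤ ‖x‖ := by
  have hone : ‖ω.toPreGNS 1‖ = 1 := by simp [PositiveLinearMap.preGNS_norm_def, hω]
  calc ‖ω.toPreGNS x‖ = ‖ω.leftMulMapPreGNS x (ω.toPreGNS 1)‖ := by simp
    _ ≤ ‖x‖ * ‖ω.toPreGNS 1‖ :=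
        ContinuousLinearMap.le_of_opNorm_le _
          (LinearMap.mkContinuous_norm_le _ (norm_nonneg x) _) _
    _ = ‖x‖ := by rw [hone, mul_one]

theorem norm_apply_mul_le_norm_mul_norm_toPreGNS (hω : ω 1 = 1) (x y : A) :
    ‖ω (x * y)‖ ≤ ‖x‖ * ‖ω.toPreGNS y‖ := by
  calc ‖ω (x * y)‖ = ‖inner ℂ (ω.toPreGNS (star x)) (ω.toPreGNS y)‖ := by
        simp [PositiveLinearMap.preGNS_inner_def]
    _ ≤ ‖ω.toPreGNS (star x)‖ * ‖ω.toPreGNS y‖ := norm_inner_le_norm _ _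
    _ ≤ ‖x‖ * ‖ω.toPreGNS y‖ := by
        gcongr
        exact (norm_toPreGNS_le hω _).trans_eq (norm_star x)

theorem norm_apply_le_norm (hω : ω 1 = 1) (x : A) : ‖ω x‖ ≤ ‖x‖ := by
  have := norm_apply_mul_le_norm_mul_norm_toPreGNS hω x 1
  simpa [PositiveLinearMap.preGNS_norm_def, hω] using this

theorem norm_expect_apply_mul_sq_le (hω : ω 1 = 1) {ι : Type*} [Fintype ι] (v : ι → A) {x : A}
    {C : ℝ} (hx : ‖x‖ ≤ C) :
    ‖𝔼 i, ω (x * v i)‖ ^ 2 ≤ C ^ 2 * (𝔼 i, 𝔼 j, ω (star (v i) * v j)).re := by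
  have hsum : ‖∑ i, ω (x * v i)‖ ^ 2 ≤ C ^ 2 * (∑ i, ∑ j, ω (star (v i) * v j)).re := by
    calc ‖∑ i, ω (x * v i)‖ ^ 2 = ‖ω (x * ∑ i, v i)‖ ^ 2 := by rw [Finset.mul_sum, map_sum]
      _ ≤ (C * ‖ω.toPreGNS (∑ i, v i)‖) ^ 2 := by
          gcongr
          exact (norm_apply_mul_le_norm_mul_norm_toPreGNS hω _ _).trans (by gcongr)
      _ = C ^ 2 * (ω (star (∑ i, v i) * ∑ j, v j)).re := by
          rw [mul_pow]
          congr 1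
          exact_mod_cast congrArg Complex.re (ω.preGNS_norm_sq (ω.toPreGNS (∑ i, v i)))
      _ = C ^ 2 * (∑ i, ∑ j, ω (star (v i) * v j)).re := by
          simp only [star_sum, Finset.sum_mul_sum, map_sum]
  simp only [Fintype.expect_eq_sum_div_card, ← Finset.sum_div, norm_div, div_pow, div_div,
    Complex.norm_natCast, ← Nat.cast_mul, Complex.div_natCast_re]
  rw [← mul_div_assoc, sq (Fintype.card ι : ℝ), ← Nat.cast_mul]
  gcongr

end State

section Expect

variable {𝕜 : Type*} [RCLike 𝕜] {ι : Type*} [Fintype ι] [Nonempty ι]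

theorem norm_expect_le_of_forall_le {f : ι → 𝕜} {C : ℝ} (h : ∀ i, ‖f i‖ ≤ C) : ‖𝔼 i, f i‖ ≤ C :=
  (RCLike.norm_expect_le (K := 𝕜)).trans (Finset.expect_le Finset.univ_nonempty fun i _ => h i)

theorem exists_lt_norm_of_lt_norm_expect {f : ι → 𝕜} {r : ℝ} (h : r < ‖𝔼 i, f i‖) :
    ∃ i, r < ‖f i‖ := by
  contrapose! h
  exact norm_expect_le_of_forall_le h

theorem norm_expect_sq_le_expect_norm_sq (f : ι → 𝕜) : ‖𝔼 i, f i‖ ^ 2 ≤ 𝔼 i, ‖f i‖ ^ 2 := by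
  calc ‖𝔼 i, f i‖ ^ 2 ≤ (𝔼 i, ‖f i‖ * 1) ^ 2 := by
        simp only [mul_one]
        gcongr
        exact RCLike.norm_expect_le (K := 𝕜)
    _ ≤ (𝔼 i, ‖f i‖ ^ 2) * 𝔼 _i : ι, (1 : ℝ) ^ 2 := Finset.expect_mul_sq_le_sq_mul_sq _ _ _
    _ = 𝔼 i, ‖f i‖ ^ 2 := by rw [one_pow, Fintype.expect_const, mul_one]

theorem expect_expect_le_of_pairwise {K : ι → ι → ℝ} {C δ : ℝ} (hδ : 0 ≤ δ)
    (hdiag : ∀ i, K i i ≤ C) (hoff : Pairwise fun i j => K i j ≤ δ) :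
    𝔼 i, 𝔼 j, K i j ≤ C / Fintype.card ι + δ := by
  classical
  calc 𝔼 i, 𝔼 j, K i j ≤ 𝔼 i, 𝔼 j, ((if i = j then C else 0) + δ) := by
        refine Finset.expect_le_expect fun i _ => Finset.expect_le_expect fun j _ => ?_
        split_ifs with hij
        · exact hij ▸ (hdiag i).trans (le_add_of_nonneg_right hδ)
        · exact (hoff hij).trans_eq (zero_add δ).symm
    _ = C / Fintype.card ι + δ := by
        simp only [Finset.expect_add_distrib, Finset.expect_ite_eq, Finset.mem_univ, ↓reduceIte,
          Finset.card_univ, NNRat.smul_def, NNRat.cast_inv, NNRat.cast_natCast,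
          Fintype.expect_const, add_left_inj]
        ring

end Expect

theorem eventually_exists_forall_smul_mem_of_isFoelner {G X ι κ : Type*} [Group G] [MulAction G X]
    [MeasurableSpace X] {μ : Measure X} {l : Filter ι} {F : ι → Set X} (hF : IsFoelner G μ l F)
    [Finite κ] (s : κ → G) : ∀ᶠ n in l, ∃ x, ∀ k, s k • x ∈ F n := by
  cases nonempty_fintype κ
  have hsmall : ∀ᶠ n in l, ∀ k,
      μ (symmDiff ((s k)⁻¹ • F n) (F n)) / μ (F n) < (Fintype.card κ + 1 : ENNReal)⁻¹ :=
    eventually_all.2 fun k => (hF.tendsto_meas_smul_symmDiff _).eventually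
      (gt_mem_nhds (ENNReal.inv_pos.2 (by finiteness)))
  filter_upwards [hsmall, hF.eventually_meas_ne_zero, hF.eventually_meas_ne_top]
    with n hn hne_zero hne_top
  by_contra! hcover
  have hsub : F n ⊆ ⋃ k, symmDiff ((s k)⁻¹ • F n) (F n) := fun x hx => by
    obtain ⟨k, hk⟩ := hcover x
    exact Set.mem_iUnion.2 ⟨k, Or.inr ⟨hx, by rwa [Set.mem_inv_smul_set_iff]⟩⟩
  refine lt_irrefl (μ (F n)) ?_
  calc μ (F n) ≤ ∑ k, μ (symmDiff ((s k)⁻¹ • F n) (F n)) :=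
        (measure_mono hsub).trans (measure_iUnion_fintype_le μ _)
    _ ≤ ∑ _k : κ, (Fintype.card κ + 1 : ENNReal)⁻¹ * μ (F n) :=
        Finset.sum_le_sum fun k _ => (ENNReal.div_le_iff hne_zero hne_top).1 (hn k).le
    _ = Fintype.card κ / (Fintype.card κ + 1 : ENNReal) * μ (F n) := by
        rw [Finset.sum_const, nsmul_eq_mul, ← mul_assoc, div_eq_mul_inv, Finset.card_univ]
    _ < 1 * μ (F n) := by
        refine ENNReal.mul_lt_mul_left hne_zero hne_top ?_
        rw [ENNReal.div_lt_iff (by simp) (by simp), one_mul]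
        exact ENNReal.lt_add_right (by finiteness) one_ne_zero
    _ = μ (F n) := one_mul _

theorem isFoelner_of_tendsto_toReal {G ι : Type*} [CommGroup G] [MeasurableSpace G]
    {μ : Measure G} (hμ : ∀ (V : Set G) (g : G), MeasurableSet V → μ (V * {g}) = μ V)
    {l : Filter ι} {F : ι → Set G} (hmeas : ∀ n, MeasurableSet (F n))
    (hfin : ∀ᶠ n in l, 0 < μ (F n) ∧ μ (F n) < ⊤)
    (htendsto : ∀ g : G, Tendsto
      (fun n => (μ (symmDiff (F n) (F n * {g}))).toReal / (μ (F n)).toReal) l (𝓝 0)) :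
    IsFoelner G μ l F where
  eventually_measurableSet := .of_forall hmeas
  eventually_meas_ne_zero := hfin.mono fun _ h => h.1.ne'
  eventually_meas_ne_top := hfin.mono fun _ h => h.2.ne
  tendsto_meas_smul_symmDiff g := by
    have hreal := ENNReal.tendsto_ofReal (htendsto g)
    rw [ENNReal.ofReal_zero] at hreal
    refine hreal.congr' ?_
    filter_upwards [hfin] with n ⟨hpos, hlt⟩
    have hsymm : μ (symmDiff (F n) (F n * {g})) ≠ ⊤ := by
      refine measure_ne_top_of_subset symmDiff_le_sup (measure_union_ne_top hlt.ne ?_)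
      rw [hμ _ _ (hmeas n)]
      exact hlt.ne
    rw [← ENNReal.toReal_div, ENNReal.ofReal_toReal (ENNReal.div_ne_top hsymm hpos.ne'),
      symmDiff_comm, mul_comm, ← smul_eq_mul, Set.singleton_smul]

section WeakMixing

variable {A : Type*} [CStarAlgebra A] [PartialOrder A] [StarOrderedRing A] {ω : A →ₚ[ℂ] ℂ}
  {G : Type*}

/-- Weak mixing in a finitary form that mentions no averaging sequence: any finitely many pairs of
observables are simultaneously almost uncorrelated at some element of `G`. -/
def IsWeaklyMixing (ω : A →ₚ[ℂ] ℂ) (τ : G → A ≃⋆ₐ[ℂ] A) : Prop :=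
  ∀ (Q : Finset (A × A)) (δ : ℝ), 0 < δ → ∃ g, ∀ q ∈ Q, ‖ω (q.1 * τ g q.2) - ω q.1 * ω q.2‖ < δ

theorem norm_apply_mul_sub_le (hω : ω 1 = 1) (φ : A ≃⋆ₐ[ℂ] A) (a b : A) :
    ‖ω (a * φ b) - ω a * ω b‖ ≤ 2 * (‖a‖ * ‖b‖) := by
  calc ‖ω (a * φ b) - ω a * ω b‖ ≤ ‖ω (a * φ b)‖ + ‖ω a‖ * ‖ω b‖ := by
        rw [← norm_mul]
        exact norm_sub_le _ _
    _ ≤ ‖a‖ * ‖b‖ + ‖a‖ * ‖b‖ := by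
        gcongr
        · exact ((norm_apply_le_norm hω _).trans (norm_mul_le _ _)).trans_eq
            (by rw [StarAlgEquiv.norm_map])
        · exact norm_apply_le_norm hω a
        · exact norm_apply_le_norm hω b
    _ = 2 * (‖a‖ * ‖b‖) := (two_mul _).symm

theorem isWeaklyMixing_of_tendsto_average (hω : ω 1 = 1) [MeasurableSpace G] {μ : Measure G}
    {τ : G → A ≃⋆ₐ[ℂ] A} (hmeas : ∀ a b, Measurable fun g => ω (a * τ g b))
    {ι : Type*} {l : Filter ι} [l.NeBot] {Λ : ι → Set G}
    (hΛ : ∀ᶠ n in l, 0 < μ (Λ n) ∧ μ (Λ n) < ⊤)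
    (htendsto : ∀ a b, Tendsto
      (fun n => (μ (Λ n)).toReal⁻¹ * ∫ g in Λ n, ‖ω (a * τ g b) - ω a * ω b‖ ∂μ) l (𝓝 0)) :
    IsWeaklyMixing ω τ := by
  intro Q δ hδ
  have hsum := tendsto_finsetSum Q fun q _ => htendsto q.1 q.2
  rw [Finset.sum_const_zero] at hsum
  obtain ⟨n, hn, hpos, hlt⟩ := ((hsum.eventually (gt_mem_nhds hδ)).and hΛ).exists
  have hint : ∀ q ∈ Q, IntegrableOn (fun g => ‖ω (q.1 * τ g q.2) - ω q.1 * ω q.2‖) (Λ n) μ :=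
    fun q _ => .of_bound hlt ((hmeas q.1 q.2).sub_const _).norm.aestronglyMeasurable _
      (.of_forall fun g => (norm_norm _).trans_le (norm_apply_mul_sub_le hω (τ g) q.1 q.2))
  obtain ⟨g, -, hg⟩ := exists_le_setAverage hpos.ne' hlt.ne (integrable_finsetSum Q hint)
  refine ⟨g, fun q hq => ?_⟩
  calc ‖ω (q.1 * τ g q.2) - ω q.1 * ω q.2‖
      ≤ ∑ q ∈ Q, ‖ω (q.1 * τ g q.2) - ω q.1 * ω q.2‖ :=
        Finset.single_le_sum (f := fun q : A × A => ‖ω (q.1 * τ g q.2) - ω q.1 * ω q.2‖)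
          (fun _ _ => norm_nonneg _) hq
    _ ≤ _ := hg
    _ = ∑ q ∈ Q, (μ (Λ n)).toReal⁻¹ * ∫ g in Λ n, ‖ω (q.1 * τ g q.2) - ω q.1 * ω q.2‖ ∂μ := by
        rw [setAverage_eq, integral_finsetSum _ hint, smul_eq_mul, Finset.mul_sum]
        rfl
    _ < δ := hn

end WeakMixing

section Decorrelation

variable {A : Type*} [CStarAlgebra A] [PartialOrder A] [StarOrderedRing A] {ω : A →ₚ[ℂ] ℂ}
  {G ι : Type*} {τ : G → A ≃⋆ₐ[ℂ] A} {z : A} {δ η : ℝ}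

/-- The translates of `z` along the family `s` are pairwise uncorrelated up to `δ`. In the GNS
space this says that the vectors `τ (s i) z - ω z • 1` are almost orthogonal. -/
def IsDecorrelated (ω : A →ₚ[ℂ] ℂ) (τ : G → A ≃⋆ₐ[ℂ] A) (s : ι → G) (z : A) (δ : ℝ) : Prop :=
  Pairwise fun i j => ‖ω (star (τ (s i) z) * τ (s j) z) - star (ω z) * ω z‖ ≤ δ

/-- Mean-ergodic estimate along a finite family `s`: the average of `τ (s i) z` is within `η` of
the scalar `ω z`, tested against all `x` and uniformly in `‖x‖`. -/
def AveragesToMean [Fintype ι] (ω : A →ₚ[ℂ] ℂ) (τ : G → A ≃⋆ₐ[ℂ] A) (s : ι → G) (z : A) (η : ℝ) :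
    Prop :=
  ∀ x, ‖𝔼 i, ω (x * τ (s i) z) - ω x * ω z‖ ≤ ‖x‖ * η

theorem exists_seq_isDecorrelated (hinv : ∀ g a, ω (τ g a) = ω a) (hmix : IsWeaklyMixing ω τ)
    (Z : Finset A) (hδ : 0 < δ) : ∃ s : ℕ → G, ∀ z ∈ Z, IsDecorrelated ω τ s z δ := by
  classical
  let r (g h : G) : Prop := ∀ z ∈ Z, ‖ω (star (τ g z) * τ h z) - star (ω z) * ω z‖ ≤ δ
  have hr : Std.Symm r := ⟨fun g h hgh z hz => by
    rw [← norm_star]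
    simpa [← map_star, mul_comm] using hgh z hz⟩
  obtain ⟨s, -, hs⟩ := exists_seq_of_forall_finset_exists' (fun _ => True) r fun S _ => by
    obtain ⟨h, hh⟩ := hmix ((S ×ˢ Z).image fun p => (star (τ p.1 p.2), p.2)) δ hδ
    refine ⟨h, trivial, fun g hg z hz => ?_⟩
    have := hh _ (Finset.mem_image_of_mem _ (Finset.mk_mem_product hg hz))
    simpa only [map_star, hinv] using this.le
  exact ⟨s, fun z hz i j hij => hs hij z hz⟩

theorem AveragesToMean.norm_expect_le [Fintype ι] {s : ι → G} {θ : ℝ} (hω : ω 1 = 1)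
    (hs : AveragesToMean ω τ s z η) (hz : ‖ω z‖ ≤ θ) (x : A) :
    ‖𝔼 i, ω (x * τ (s i) z)‖ ≤ ‖x‖ * (η + θ) := by
  calc ‖𝔼 i, ω (x * τ (s i) z)‖
      = ‖(𝔼 i, ω (x * τ (s i) z) - ω x * ω z) + ω x * ω z‖ := by rw [sub_add_cancel]
    _ ≤ ‖𝔼 i, ω (x * τ (s i) z) - ω x * ω z‖ + ‖ω x‖ * ‖ω z‖ :=
        (norm_add_le _ _).trans_eq (by rw [norm_mul])
    _ ≤ ‖x‖ * η + ‖x‖ * θ := by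
        gcongr
        · exact hs x
        · exact norm_apply_le_norm hω x
    _ = ‖x‖ * (η + θ) := (mul_add _ _ _).symm

theorem IsDecorrelated.mul_const [CommMonoid G] {τ : G →* (A ≃⋆ₐ[ℂ] A)}
    (hinv : ∀ g a, ω (τ g a) = ω a) {s : ι → G} (hs : IsDecorrelated ω τ s z δ) (g : G) :
    IsDecorrelated ω τ (fun i => s i * g) z δ := by
  intro i j hij
  have hmove : star (τ (s i * g) z) * τ (s j * g) z = τ g (star (τ (s i) z) * τ (s j) z) := by
    simp only [mul_comm _ g, map_mul, map_star, StarAlgEquiv.mul_apply]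
  simpa only [hmove, hinv] using hs hij

theorem AveragesToMean.mul_const [Fintype ι] [CommGroup G] {τ : G →* (A ≃⋆ₐ[ℂ] A)}
    (hinv : ∀ g a, ω (τ g a) = ω a) {s : ι → G} (hs : AveragesToMean ω τ s z η) (g h : G) :
    AveragesToMean ω τ (fun i => s i * g) (τ h z) η := by
  intro x
  have hmove (i : ι) : ω (x * τ (s i * g) (τ h z)) = ω (τ (g * h)⁻¹ x * τ (s i) z) := by
    have hcancel : (g * h)⁻¹ * (s i * g * h) = s i := by
      rw [mul_assoc (s i), inv_mul_cancel_comm_assoc]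
    rw [← hinv (g * h)⁻¹, map_mul, ← StarAlgEquiv.mul_apply (τ (s i * g)),
      ← StarAlgEquiv.mul_apply (τ (g * h)⁻¹), ← map_mul, ← map_mul, hcancel]
  calc ‖𝔼 i, ω (x * τ (s i * g) (τ h z)) - ω x * ω (τ h z)‖
      = ‖𝔼 i, ω (τ (g * h)⁻¹ x * τ (s i) z) - ω (τ (g * h)⁻¹ x) * ω z‖ := by
        simp only [hmove, hinv]
    _ ≤ ‖τ (g * h)⁻¹ x‖ * η := hs _
    _ = ‖x‖ * η := by rw [StarAlgEquiv.norm_map]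

theorem AveragesToMean.of_isDecorrelated [Fintype ι] [Nonempty ι] {s : ι → G} (hω : ω 1 = 1)
    (hinv : ∀ g a, ω (τ g a) = ω a) (hs : IsDecorrelated ω τ s z δ) (hδ : 0 ≤ δ) (hη : 0 ≤ η)
    (hle : ‖z - ω z • 1‖ ^ 2 / Fintype.card ι + δ ≤ η ^ 2) : AveragesToMean ω τ s z η := by
  intro x
  let v (i : ι) : A := τ (s i) (z - ω z • 1)
  have hmean : 𝔼 i, ω (x * v i) = 𝔼 i, ω (x * τ (s i) z) - ω x * ω z := by
    simp [v, mul_sub, Finset.expect_sub_distrib, mul_comm]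
  have hgram : 𝔼 i, 𝔼 j, (ω (star (v i) * v j)).re ≤ ‖z - ω z • 1‖ ^ 2 / Fintype.card ι + δ := by
    refine expect_expect_le_of_pairwise hδ (fun i => ?_) fun i j hij => ?_
    · calc (ω (star (v i) * v i)).re ≤ ‖star (v i) * v i‖ :=
            (Complex.re_le_norm _).trans (norm_apply_le_norm hω _)
        _ = ‖z - ω z • 1‖ ^ 2 := by rw [CStarRing.norm_star_mul_self, StarAlgEquiv.norm_map, sq]
    · have hcov : ω (star (v i) * v j) = ω (star (τ (s i) z) * τ (s j) z) - star (ω z) * ω z := by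
        simp [v, sub_mul, mul_sub, hinv, hω, map_star]
      exact (Complex.re_le_norm _).trans (hcov ▸ hs hij)
  rw [← hmean]
  refine (sq_le_sq₀ (norm_nonneg _) (by positivity)).1 ?_
  calc ‖𝔼 i, ω (x * v i)‖ ^ 2 ≤ ‖x‖ ^ 2 * (𝔼 i, 𝔼 j, ω (star (v i) * v j)).re :=
        norm_expect_apply_mul_sq_le hω v le_rfl
    _ ≤ ‖x‖ ^ 2 * η ^ 2 := by
        simp only [Complex.re_expect]
        gcongr
        exact hgram.trans hle
    _ = (‖x‖ * η) ^ 2 := (mul_pow _ _ _).symm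

theorem eventually_averagesToMean_of_isDecorrelated (hω : ω 1 = 1)
    (hinv : ∀ g a, ω (τ g a) = ω a) {s : ℕ → G} (hs : IsDecorrelated ω τ s z δ) (hδ : 0 ≤ δ)
    (hη : 0 ≤ η) (hlt : δ < η ^ 2) :
    ∀ᶠ n : ℕ in atTop, AveragesToMean ω τ (fun i : Fin (n + 1) => s i) z η := by
  have hlim : Tendsto (fun n : ℕ => ‖z - ω z • 1‖ ^ 2 / (n + 1 : ℕ) + δ) atTop (𝓝 (0 + δ)) :=
    ((tendsto_const_div_atTop_nhds_zero_nat _).comp (tendsto_add_atTop_nat 1)).add_const δ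
  rw [zero_add] at hlim
  filter_upwards [hlim.eventually (gt_mem_nhds hlt)] with n hn
  exact .of_isDecorrelated hω hinv (fun i j hij => hs (Fin.val_ne_of_ne hij)) hδ hη
    (by simpa using hn.le)

theorem eventually_exists_isDecorrelated_and_averagesToMean (hω : ω 1 = 1)
    (hinv : ∀ g a, ω (τ g a) = ω a) (hmix : IsWeaklyMixing ω τ) (Z : Finset A) (hη : 0 < η) :
    ∀ᶠ n : ℕ in atTop, ∃ s : Fin (n + 1) → G, ∀ z ∈ Z,
      IsDecorrelated ω τ s z η ∧ AveragesToMean ω τ s z η := by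
  obtain ⟨δ, hδ, hlt⟩ := exists_between (lt_min hη (pow_pos hη 2))
  obtain ⟨hδη, hδη_sq⟩ := lt_min_iff.1 hlt
  obtain ⟨s, hs⟩ := exists_seq_isDecorrelated hinv hmix Z hδ
  filter_upwards [(Filter.eventually_all_finset Z).2 fun z hz =>
    eventually_averagesToMean_of_isDecorrelated hω hinv (hs z hz) hδ.le hη.le hδη_sq] with n hn
  exact ⟨fun i => s i, fun z hz =>
    ⟨fun i j hij => (hs z hz (Fin.val_ne_of_ne hij)).trans hδη.le, hn z hz⟩⟩

end Decorrelation

section Trace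

variable {A : Type*} [CStarAlgebra A] [PartialOrder A] [StarOrderedRing A] {ω : A →ₚ[ℂ] ℂ}
  {G ι κ : Type*} [Fintype ι] [Fintype κ]

theorem norm_expect_expect_apply_mul_sq_le [Nonempty ι] (hω : ω 1 = 1) {u : ι → A} {C : ℝ}
    (hu : ∀ i, ‖u i‖ ≤ C) (w : ι → κ → A) :
    ‖𝔼 i, 𝔼 j, ω (u i * w i j)‖ ^ 2 ≤
      C ^ 2 * 𝔼 j, 𝔼 k, (𝔼 i, ω (star (w i j) * w i k)).re := by
  calc ‖𝔼 i, 𝔼 j, ω (u i * w i j)‖ ^ 2 ≤ 𝔼 i, ‖𝔼 j, ω (u i * w i j)‖ ^ 2 :=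
        norm_expect_sq_le_expect_norm_sq _
    _ ≤ 𝔼 i, C ^ 2 * (𝔼 j, 𝔼 k, ω (star (w i j) * w i k)).re :=
        Finset.expect_le_expect fun i _ => norm_expect_apply_mul_sq_le hω _ (hu i)
    _ = C ^ 2 * 𝔼 j, 𝔼 k, (𝔼 i, ω (star (w i j) * w i k)).re := by
        simp only [← Finset.mul_expect, Complex.re_expect]
        rw [Finset.expect_comm]
        congr! 2 with j
        exact Finset.expect_comm _ _ _

variable [Nonempty κ]

theorem norm_expect_expect_apply_mul_mul_mul_sq_le [Nonempty ι] [Monoid G]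
    {τ : G →* (A ≃⋆ₐ[ℂ] A)} (hω : ω 1 = 1)
    (htr : ∀ a b, ω (a * b) = ω (b * a)) {s : ι → G} {t : κ → G} {a : A} {η : ℝ} (hη : 0 ≤ η)
    (hoff : Pairwise fun j k =>
      ∀ x, ‖𝔼 i, ω (x * τ (s i) (τ (t k) a * star (τ (t j) a)))‖ ≤ ‖x‖ * η) (b c d : A) :
    ‖𝔼 i, 𝔼 j, ω (τ (s i * t j) a * τ (s i) b * τ (t j) c * d)‖ ^ 2 ≤
      (‖b‖ * (‖c‖ * ‖d‖)) ^ 2 * (‖a‖ ^ 2 / Fintype.card κ + η) := by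
  let y (j : κ) : A := τ (t j) c * d
  let X (j k : κ) : A := star (y j) * y k
  let z (j k : κ) : A := τ (t k) a * star (τ (t j) a)
  have hy (j : κ) : ‖y j‖ ≤ ‖c‖ * ‖d‖ := (norm_mul_le _ _).trans_eq (by rw [StarAlgEquiv.norm_map])
  have hX (j k : κ) : ‖X j k‖ ≤ (‖c‖ * ‖d‖) ^ 2 := by
    calc ‖X j k‖ ≤ ‖y j‖ * ‖y k‖ := (norm_mul_le _ _).trans_eq (by rw [norm_star])
      _ ≤ (‖c‖ * ‖d‖) * (‖c‖ * ‖d‖) := by gcongr <;> exact hy _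
      _ = (‖c‖ * ‖d‖) ^ 2 := (sq _).symm
  have hcycle (i : ι) (j : κ) : ω (τ (s i * t j) a * τ (s i) b * τ (t j) c * d) =
      ω (τ (s i) b * (y j * τ (s i * t j) a)) := by
    rw [mul_assoc, mul_assoc, htr, mul_assoc]
  have hgram (i : ι) (j k : κ) :
      ω (star (y j * τ (s i * t j) a) * (y k * τ (s i * t k) a)) =
        ω (X j k * τ (s i) (z j k)) := by
    have hz : τ (s i) (z j k) = τ (s i * t k) a * star (τ (s i * t j) a) := by
      simp only [z, map_mul, map_star, StarAlgEquiv.mul_apply]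
    rw [hz, star_mul, mul_assoc, htr]
    simp only [X, mul_assoc]
  have hz (i : ι) (j : κ) : ‖τ (s i) (z j j)‖ = ‖a‖ ^ 2 := by
    rw [StarAlgEquiv.norm_map, CStarRing.norm_self_mul_star, StarAlgEquiv.norm_map, sq]
  calc ‖𝔼 i, 𝔼 j, ω (τ (s i * t j) a * τ (s i) b * τ (t j) c * d)‖ ^ 2
      ≤ ‖b‖ ^ 2 * 𝔼 j, 𝔼 k, (𝔼 i, ω (X j k * τ (s i) (z j k))).re := by
        simp only [hcycle, ← hgram]
        exact norm_expect_expect_apply_mul_sq_le hω (fun i => (StarAlgEquiv.norm_map _ b).le) _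
    _ ≤ ‖b‖ ^ 2 * ((‖c‖ * ‖d‖) ^ 2 * ‖a‖ ^ 2 / Fintype.card κ + (‖c‖ * ‖d‖) ^ 2 * η) := by
        gcongr
        refine expect_expect_le_of_pairwise (by positivity) (fun j => ?_) fun j k hjk => ?_
        · refine (Complex.re_le_norm _).trans (norm_expect_le_of_forall_le fun i => ?_)
          calc ‖ω (X j j * τ (s i) (z j j))‖ ≤ ‖X j j‖ * ‖τ (s i) (z j j)‖ :=
                (norm_apply_le_norm hω _).trans (norm_mul_le _ _)
            _ ≤ (‖c‖ * ‖d‖) ^ 2 * ‖a‖ ^ 2 := by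
                rw [hz]
                gcongr
                exact hX j j
        · refine (Complex.re_le_norm _).trans ((hoff hjk _).trans ?_)
          gcongr
          exact hX j k
    _ = (‖b‖ * (‖c‖ * ‖d‖)) ^ 2 * (‖a‖ ^ 2 / Fintype.card κ + η) := by ring

theorem norm_expect_expect_apply_mul_mul_sub_le {τ : G → A ≃⋆ₐ[ℂ] A} (hω : ω 1 = 1)
    (htr : ∀ a b, ω (a * b) = ω (b * a)) {s : ι → G} {t : κ → G} {b c : A} {η : ℝ} (hη : 0 ≤ η)
    (hb : AveragesToMean ω τ s b η) (hc : AveragesToMean ω τ t c η) (d : A) :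
    ‖𝔼 i, 𝔼 j, ω (τ (s i) b * τ (t j) c * d) - ω b * ω c * ω d‖ ≤
      (‖b‖ + ‖c‖) * ‖d‖ * η := by
  have hs : ‖𝔼 j, (𝔼 i, ω (τ (s i) b * τ (t j) c * d) - ω (τ (t j) c * d) * ω b)‖ ≤
      ‖c‖ * ‖d‖ * η := by
    refine norm_expect_le_of_forall_le fun j => ?_
    calc ‖𝔼 i, ω (τ (s i) b * τ (t j) c * d) - ω (τ (t j) c * d) * ω b‖
        = ‖𝔼 i, ω (τ (t j) c * d * τ (s i) b) - ω (τ (t j) c * d) * ω b‖ := by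
          simp only [mul_assoc, htr (τ (s _) b)]
      _ ≤ ‖τ (t j) c * d‖ * η := hb _
      _ ≤ ‖c‖ * ‖d‖ * η := by
          gcongr
          exact (norm_mul_le _ _).trans_eq (by rw [StarAlgEquiv.norm_map])
  have ht : ‖ω b * (𝔼 j, ω (d * τ (t j) c) - ω d * ω c)‖ ≤ ‖b‖ * (‖d‖ * η) := by
    rw [norm_mul]
    gcongr
    · exact norm_apply_le_norm hω b
    · exact hc d
  calc ‖𝔼 i, 𝔼 j, ω (τ (s i) b * τ (t j) c * d) - ω b * ω c * ω d‖
      = ‖𝔼 j, (𝔼 i, ω (τ (s i) b * τ (t j) c * d) - ω (τ (t j) c * d) * ω b) +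
          ω b * (𝔼 j, ω (d * τ (t j) c) - ω d * ω c)‖ := by
        rw [Finset.expect_comm, Finset.expect_sub_distrib, ← Finset.expect_mul]
        simp only [htr d]
        ring_nf
    _ ≤ ‖c‖ * ‖d‖ * η + ‖b‖ * (‖d‖ * η) := (norm_add_le _ _).trans (add_le_add hs ht)
    _ = (‖b‖ + ‖c‖) * ‖d‖ * η := by ring

end Trace

section Recurrence

variable {A : Type*} [CStarAlgebra A] [PartialOrder A] [StarOrderedRing A] {ω : A →ₚ[ℂ] ℂ}
  {G : Type*}

theorem norm_expect_expect_apply_mul_mul_mul_sub_le [Monoid G] {τ : G →* (A ≃⋆ₐ[ℂ] A)}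
    {ι κ : Type*} [Fintype ι] [Fintype κ] [Nonempty ι] [Nonempty κ] (hω : ω 1 = 1)
    (htr : ∀ a b, ω (a * b) = ω (b * a)) {s : ι → G} {t : κ → G} {a a₀ b c : A} {η : ℝ} (hη : 0 ≤ η)
    (ha₀ : a₀ = a - ω a • 1) (hcard : ‖a₀‖ ^ 2 / Fintype.card κ ≤ η)
    (ht : IsDecorrelated ω τ t a₀ η)
    (hs : ∀ j k, AveragesToMean ω τ s (τ (t k) a₀ * star (τ (t j) a₀)) η)
    (hb : AveragesToMean ω τ s b η) (hc : AveragesToMean ω τ t c η) (d : A) :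
    ‖𝔼 i, 𝔼 j, ω (τ (s i * t j) a * τ (s i) b * τ (t j) c * d) - ω a * ω b * ω c * ω d‖ ≤
      ‖b‖ * (‖c‖ * ‖d‖) * √(3 * η) + ‖ω a‖ * ((‖b‖ + ‖c‖) * ‖d‖ * η) := by
  have hoff : Pairwise fun j k => ‖ω (τ (t k) a₀ * star (τ (t j) a₀))‖ ≤ η := fun j k hjk => by
    simpa [htr, ha₀, hω] using ht hjk
  have hsplit : 𝔼 i, 𝔼 j, ω (τ (s i * t j) a * τ (s i) b * τ (t j) c * d) =
      𝔼 i, 𝔼 j, ω (τ (s i * t j) a₀ * τ (s i) b * τ (t j) c * d) +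
        ω a * 𝔼 i, 𝔼 j, ω (τ (s i) b * τ (t j) c * d) := by
    simp only [ha₀, Finset.mul_expect, ← Finset.expect_add_distrib]
    simp [sub_mul]
  have hbox : ‖𝔼 i, 𝔼 j, ω (τ (s i * t j) a₀ * τ (s i) b * τ (t j) c * d)‖ ≤
      ‖b‖ * (‖c‖ * ‖d‖) * √(3 * η) := by
    refine (sq_le_sq₀ (norm_nonneg _) (by positivity)).1 ?_
    calc _ ≤ (‖b‖ * (‖c‖ * ‖d‖)) ^ 2 * (‖a₀‖ ^ 2 / Fintype.card κ + (η + η)) :=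
          norm_expect_expect_apply_mul_mul_mul_sq_le hω htr (by positivity)
            (fun j k hjk => (hs j k).norm_expect_le hω (hoff hjk)) b c d
      _ ≤ (‖b‖ * (‖c‖ * ‖d‖)) ^ 2 * (3 * η) := by gcongr; linarith
      _ = (‖b‖ * (‖c‖ * ‖d‖) * √(3 * η)) ^ 2 := by
          rw [mul_pow _ √(3 * η), Real.sq_sqrt (by positivity)]
  calc _ = ‖𝔼 i, 𝔼 j, ω (τ (s i * t j) a₀ * τ (s i) b * τ (t j) c * d) +
          ω a * (𝔼 i, 𝔼 j, ω (τ (s i) b * τ (t j) c * d) - ω b * ω c * ω d)‖ := by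
        rw [hsplit]
        ring_nf
    _ ≤ _ := by
        refine (norm_add_le _ _).trans (add_le_add hbox ?_)
        rw [norm_mul]
        gcongr
        exact norm_expect_expect_apply_mul_mul_sub_le hω htr hη hb hc d

variable [CommGroup G] {τ : G →* (A ≃⋆ₐ[ℂ] A)}

theorem exists_forall_norm_expect_expect_sub_le (hω : ω 1 = 1)
    (htr : ∀ a b, ω (a * b) = ω (b * a)) (hinv : ∀ g a, ω (τ g a) = ω a)
    (hmix : IsWeaklyMixing ω τ) {η : ℝ} (hη : 0 < η) (a b c d : A) :
    ∃ (m n : ℕ) (s : Fin (m + 1) → G) (t : Fin (n + 1) → G), ∀ g h,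
      ‖𝔼 i, 𝔼 j, ω (τ (s i * g * (t j * h)) a * τ (s i * g) b * τ (t j * h) c * d) -
          ω a * ω b * ω c * ω d‖ ≤
        ‖b‖ * (‖c‖ * ‖d‖) * √(3 * η) + ‖ω a‖ * ((‖b‖ + ‖c‖) * ‖d‖ * η) := by
  classical
  let a₀ : A := a - ω a • 1
  have hcard : ∀ᶠ n : ℕ in atTop, ‖a₀‖ ^ 2 / (n + 1 : ℕ) ≤ η :=
    ((tendsto_const_div_atTop_nhds_zero_nat _).comp (tendsto_add_atTop_nat 1)).eventually
      (ge_mem_nhds hη)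
  obtain ⟨n, hn, t, ht⟩ := (hcard.and
    (eventually_exists_isDecorrelated_and_averagesToMean hω hinv hmix {a₀, c} hη)).exists
  let z (p : Fin (n + 1) × Fin (n + 1)) : A := τ (t p.2) a₀ * star (τ (t p.1) a₀)
  obtain ⟨m, s, hs⟩ := (eventually_exists_isDecorrelated_and_averagesToMean hω hinv hmix
    (insert b (Finset.univ.image z)) hη).exists
  refine ⟨m, n, s, t, fun g h => ?_⟩
  refine norm_expect_expect_apply_mul_mul_mul_sub_le hω htr hη.le rfl (by simpa using hn)
    ((ht a₀ (by simp)).1.mul_const hinv h) (fun j k => ?_) ?_ ?_ d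
  · have hz : τ (t k * h) a₀ * star (τ (t j * h) a₀) = τ h (z (j, k)) := by
      simp only [z, mul_comm _ h, map_mul, map_star, StarAlgEquiv.mul_apply]
    exact hz ▸ (hs _ (by simp)).2.mul_const hinv g h
  · simpa using (hs b (by simp)).2.mul_const hinv g 1
  · simpa using (ht c (by simp)).2.mul_const hinv h 1

theorem recurrence_nonuniform_general (hω : ω 1 = 1) (htr : ∀ a b, ω (a * b) = ω (b * a))
    [MeasurableSpace G] {μ : Measure G} (hinv : ∀ g a, ω (τ g a) = ω a)
    (hmix : IsWeaklyMixing ω τ) {κ : Type*} {l : Filter κ} {Λ₁ Λ₂ : κ → Set G}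
    (hΛ₁ : IsFoelner G μ l Λ₁) (hΛ₂ : IsFoelner G μ l Λ₂) {ε : ℝ} (hε : 0 < ε) (a b c d : A) :
    ∀ᶠ n in l, ∃ g ∈ Λ₂ n, ∃ h ∈ Λ₁ n,
      ‖ω (τ (g * h) a * τ g b * τ h c * d)‖ > ‖ω a * ω b * ω c * ω d‖ - ε := by
  let bound (η : ℝ) : ℝ := ‖b‖ * (‖c‖ * ‖d‖) * √(3 * η) + ‖ω a‖ * ((‖b‖ + ‖c‖) * ‖d‖ * η)
  obtain ⟨η, hbound, hη⟩ : ∃ η, bound η < ε ∧ 0 < η := by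
    have hcont : ContinuousAt bound 0 := by fun_prop
    exact (((hcont.eventually (gt_mem_nhds (by simpa [bound] using hε))).filter_mono
      nhdsWithin_le_nhds).and self_mem_nhdsWithin : ∀ᶠ η in 𝓝[>] 0, bound η < ε ∧ 0 < η).exists
  obtain ⟨m, n, s, t, hst⟩ := exists_forall_norm_expect_expect_sub_le hω htr hinv hmix hη a b c d
  filter_upwards [eventually_exists_forall_smul_mem_of_isFoelner hΛ₂ s,
    eventually_exists_forall_smul_mem_of_isFoelner hΛ₁ t] with k ⟨g, hg⟩ ⟨h, hh⟩
  have hlt : ‖ω a * ω b * ω c * ω d‖ - ε <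
      ‖𝔼 i, 𝔼 j, ω (τ (s i * g * (t j * h)) a * τ (s i * g) b * τ (t j * h) c * d)‖ := by
    have := norm_sub_norm_le (ω a * ω b * ω c * ω d)
      (𝔼 i, 𝔼 j, ω (τ (s i * g * (t j * h)) a * τ (s i * g) b * τ (t j * h) c * d))
    rw [norm_sub_rev] at this
    linarith [hst g h]
  obtain ⟨i, hi⟩ := exists_lt_norm_of_lt_norm_expect hlt
  obtain ⟨j, hj⟩ := exists_lt_norm_of_lt_norm_expect hi
  exact ⟨s i * g, hg i, t j * h, hh j, hj⟩

end Recurrence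

/-- **Corollary 5.7(1): the recurrence corollary, non-uniform case.** -/
theorem recurrence_nonuniform
    -- a unital C*-algebra A
    {A : Type*} [NormedRing A] [StarRing A] [CStarRing A] [NormedAlgebra ℂ A]
    [CompleteSpace A] [StarModule ℂ A]
    -- a tracial state ω on A
    (ω : A →ₗ[ℂ] ℂ) (hω_pos : ∀ a : A, 0 ≤ ω (star a * a)) (hω_one : ω 1 = 1)
    (hω_tracial : ∀ a b : A, ω (a * b) = ω (b * a))
    -- a second countable topological abelian group G with a σ-finite, right and left
    -- invariant measure μ on its Borel σ-algebra, with the inverse map μ-invariant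
    {G : Type*} [CommGroup G] [TopologicalSpace G] [IsTopologicalGroup G]
    [SecondCountableTopology G] [MeasurableSpace G] [BorelSpace G]
    (μ : Measure G) [SigmaFinite μ]
    (hRight : ∀ (V : Set G) (g : G), MeasurableSet V → μ (V * {g}) = μ V)
    (hLeft : ∀ (V : Set G) (g : G), MeasurableSet V → μ ({g} * V) = μ V)
    (hInvInv : ∀ V : Set G, MeasurableSet V → μ V⁻¹ = μ V)
    -- the action τ, making (A, ω, τ, G) a C*-dynamical system
    (τ : G → A ≃⋆ₐ[ℂ] A)
    (hτ_one : ∀ a : A, τ 1 a = a)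
    (hτ_mul : ∀ g h a, τ g (τ h a) = τ (g * h) a)
    (hω_inv : ∀ g a, ω (τ g a) = ω a)
    (hτ_meas : ∀ a b : A, Measurable fun g : G => ω (a * τ g b))
    -- the system is weakly mixing (w.r.t. some, equivalently every, Følner sequence in G)
    (hWM : ∃ Λ : ℕ → Set G, (∀ n, MeasurableSet (Λ n)) ∧
      (∀ᶠ n in atTop, 0 < μ (Λ n) ∧ μ (Λ n) < ⊤) ∧
      (∀ g : G, Tendsto
        (fun n => (μ (symmDiff (Λ n) (Λ n * {g}))).toReal / (μ (Λ n)).toReal)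
        atTop (𝓝 0)) ∧
      ∀ a b : A, Tendsto
        (fun n => (μ (Λ n)).toReal⁻¹ * ∫ g in Λ n, ‖ω (a * τ g b) - ω a * ω b‖ ∂μ)
        atTop (𝓝 0))
    -- (g,h,j,k) ↦ ω(τ_h(a₁) τ_g(a₂) τ_{gh}(a₃) τ_{jk}(a₄) τ_j(a₅) τ_k(a₆)) is
    -- Σ² × Σ²-measurable
    (hmeas6 : ∀ a₁ a₂ a₃ a₄ a₅ a₆ : A, Measurable fun q : (G × G) × (G × G) =>
      ω (τ q.1.2 a₁ * τ q.1.1 a₂ * τ (q.1.1 * q.1.2) a₃ *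
        τ (q.2.1 * q.2.2) a₄ * τ q.2.1 a₅ * τ q.2.2 a₆))
    -- a uniform Følner sequence (Λ1 n) in G ...
    (Λ1 : ℕ → Set G)
    (hΛ1meas : ∀ n, MeasurableSet (Λ1 n))
    (hΛ1fin : ∀ᶠ n in atTop, 0 < μ (Λ1 n) ∧ μ (Λ1 n) < ⊤)
    (hΛ1folner : ∀ g : G, Tendsto
      (fun n => (μ (symmDiff (Λ1 n) (Λ1 n * {g}))).toReal / (μ (Λ1 n)).toReal)
      atTop (𝓝 0))
    (hΛ1unif : ∀ᶠ m in atTop, ∀ ε > (0 : ℝ), ∀ᶠ n in atTop, ∀ g ∈ Λ1 m,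
      (μ (symmDiff (Λ1 n) (Λ1 n * {g}))).toReal ≤ ε * (μ (Λ1 n)).toReal)
    -- ... satisfying the Tempel'man condition ...
    (hΛ1temp : ∃ c : ℝ, 0 < c ∧ ∀ᶠ n in atTop, MeasurableSet ((Λ1 n)⁻¹ * Λ1 n) ∧
      μ ((Λ1 n)⁻¹ * Λ1 n) ≤ ENNReal.ofReal c * μ (Λ1 n))
    -- ... and such that (Λ1 n⁻¹ Λ1 n) is also Følner in G
    (hΛ1invfin : ∀ᶠ n in atTop, 0 < μ ((Λ1 n)⁻¹ * Λ1 n) ∧ μ ((Λ1 n)⁻¹ * Λ1 n) < ⊤)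
    (hΛ1invfolner : ∀ g : G, Tendsto
      (fun n => (μ (symmDiff ((Λ1 n)⁻¹ * Λ1 n) (((Λ1 n)⁻¹ * Λ1 n) * {g}))).toReal /
        (μ ((Λ1 n)⁻¹ * Λ1 n)).toReal)
      atTop (𝓝 0))
    -- a uniform Følner sequence (Λ2 n) in G ...
    (Λ2 : ℕ → Set G)
    (hΛ2meas : ∀ n, MeasurableSet (Λ2 n))
    (hΛ2fin : ∀ᶠ n in atTop, 0 < μ (Λ2 n) ∧ μ (Λ2 n) < ⊤)
    (hΛ2folner : ∀ g : G, Tendsto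
      (fun n => (μ (symmDiff (Λ2 n) (Λ2 n * {g}))).toReal / (μ (Λ2 n)).toReal)
      atTop (𝓝 0))
    (hΛ2unif : ∀ᶠ m in atTop, ∀ ε > (0 : ℝ), ∀ᶠ n in atTop, ∀ g ∈ Λ2 m,
      (μ (symmDiff (Λ2 n) (Λ2 n * {g}))).toReal ≤ ε * (μ (Λ2 n)).toReal)
    -- ... satisfying the Tempel'man condition ...
    (hΛ2temp : ∃ c : ℝ, 0 < c ∧ ∀ᶠ n in atTop, MeasurableSet ((Λ2 n)⁻¹ * Λ2 n) ∧
      μ ((Λ2 n)⁻¹ * Λ2 n) ≤ ENNReal.ofReal c * μ (Λ2 n))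
    -- ... and such that (Λ2 n⁻¹ Λ2 n) is also Følner in G
    (hΛ2invfin : ∀ᶠ n in atTop, 0 < μ ((Λ2 n)⁻¹ * Λ2 n) ∧ μ ((Λ2 n)⁻¹ * Λ2 n) < ⊤)
    (hΛ2invfolner : ∀ g : G, Tendsto
      (fun n => (μ (symmDiff ((Λ2 n)⁻¹ * Λ2 n) (((Λ2 n)⁻¹ * Λ2 n) * {g}))).toReal /
        (μ ((Λ2 n)⁻¹ * Λ2 n)).toReal)
      atTop (𝓝 0))
    -- the system is asymptotically abelian with respect to (Λ1 n)
    (hcomm_meas : ∀ a b : A, Measurable fun g : G => ‖a * τ g b - τ g b * a‖)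
    (hAA : ∀ a b : A, Tendsto
      (fun n => (μ (Λ1 n)).toReal⁻¹ * ∫ g in Λ1 n, ‖a * τ g b - τ g b * a‖ ∂μ)
      atTop (𝓝 0))
 :
    -- conclusion
    ∀ ε > (0 : ℝ), ∀ a b c d : A, ∃ n₀ : ℕ, ∀ n > n₀, ∃ g ∈ Λ2 n, ∃ h ∈ Λ1 n,
      ‖ω (τ (g * h) a * τ g b * τ h c * d)‖ > ‖ω a * ω b * ω c * ω d‖ - ε := by
  let _ : CStarAlgebra A := {}
  let _ : PartialOrder A := CStarAlgebra.spectralOrder A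
  let _ : StarOrderedRing A := CStarAlgebra.spectralOrderedRing A
  let φ : A →ₚ[ℂ] ℂ := .mk₀ ω fun x hx => by
    obtain ⟨y, rfl⟩ := CStarAlgebra.nonneg_iff_eq_star_mul_self.1 hx
    exact hω_pos y
  let α : G →* (A ≃⋆ₐ[ℂ] A) := .mk' τ fun g h => StarAlgEquiv.ext fun a => (hτ_mul g h a).symm
  obtain ⟨Λ, -, hΛ, -, hmix⟩ := hWM
  have hmix : IsWeaklyMixing φ α := isWeaklyMixing_of_tendsto_average hω_one hτ_meas hΛ hmix
  have hΛ1 := isFoelner_of_tendsto_toReal hRight hΛ1meas hΛ1fin hΛ1folner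
  have hΛ2 := isFoelner_of_tendsto_toReal hRight hΛ2meas hΛ2fin hΛ2folner
  intro ε hε a b c d
  obtain ⟨n₀, hn₀⟩ := eventually_atTop.1 <|
    recurrence_nonuniform_general (ω := φ) (τ := α) hω_one hω_tracial hω_inv hmix hΛ1 hΛ2 hε a b c d
  exact ⟨n₀, fun n hn => hn₀ n hn.le⟩
end
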